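/- Extended double shuffle relations for non-strict multiple zeta values: for all w1 ∈ H^1 and w2 ∈ H^0 one has Z̄^{*̄}(w1 ш̄ w2 − w1 *̄ w2) = 0 and Z̄^{ш̄}(w1 ш̄ w2 − w1 *̄ w2) = 0, where Z̄^{*̄} : (H^1, *̄) → ℝ[T] and Z̄^{ш̄} : (H^1, ш̄) → ℝ[T] are the unique ℚ-algebra homomorphisms extending Z̄ and sending y to T. -/

import Mathlib

open scoped BigOperators

/-- The two-letter alphabet {x, y}. -/
inductive Letter : Type
  | x : Letter
  | y : Letter
deriving DecidableEq

/-- `H = ℚ⟨x,y⟩`, the noncommutative polynomial ring over ℚ in two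
indeterminates, realized as the monoid algebra of the free monoid on `{x,y}`. -/
abbrev H : Type := MonoidAlgebra ℚ (FreeMonoid Letter)

namespace H

/-- The monomial (word) of `H` corresponding to an element of the free monoid. -/
noncomputable def word (w : FreeMonoid Letter) : H := MonoidAlgebra.single w 1

/-- The generator `x`. -/
noncomputable def X : H := word (FreeMonoid.of Letter.x)

/-- The generator `y`. -/
noncomputable def Y : H := word (FreeMonoid.of Letter.y)

/-- The word `z_k = x^{k-1} y` (for `k ≥ 1`). -/
def zW (k : ℕ) : FreeMonoid Letter :=
  FreeMonoid.ofList (List.replicate (k - 1) Letter.x ++ [Letter.y])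

/-- `z_k = x^{k-1} y` as an element of `H`. -/
noncomputable def z (k : ℕ) : H := word (zW k)

/-- A list `[k₁,…,kₙ]` gives the word `z_{k₁} z_{k₂} ⋯ z_{kₙ}`. -/
def zListW (ks : List ℕ) : FreeMonoid Letter :=
  FreeMonoid.ofList (ks.flatMap fun k => List.replicate (k - 1) Letter.x ++ [Letter.y])

/-- `H¹ = ℚ + Hy` as a ℚ-submodule of `H`. -/
noncomputable def H1 : Submodule ℚ H :=
  LinearMap.range (LinearMap.mulRight ℚ Y) ⊔ Submodule.span ℚ {1}

/-- `H⁰ = ℚ + xHy` as a ℚ-submodule of `H`. -/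
noncomputable def H0 : Submodule ℚ H :=
  LinearMap.range ((LinearMap.mulRight ℚ Y).comp (LinearMap.mulLeft ℚ X)) ⊔
    Submodule.span ℚ {1}

/-- Parse a word of `H¹` into the exponent list of its `z`-decomposition:
`z_{k₁}⋯z_{kₙ} ↦ [k₁,…,kₙ]` (auxiliary accumulator version). -/
def toZAux : List Letter → ℕ → List ℕ
  | [], _ => []
  | Letter.x :: r, n => toZAux r (n + 1)
  | Letter.y :: r, n => (n + 1) :: toZAux r 0

/-- The `z`-decomposition of a word of `H¹`. -/
def toZ (w : FreeMonoid Letter) : List ℕ := toZAux (FreeMonoid.toList w) 0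

/-- The harmonic product on words of `H¹` (via `z`-decompositions):
`1 * w = w * 1 = w` and
`z_k w₁ * z_l w₂ = z_k (w₁ * z_l w₂) + z_l (z_k w₁ * w₂) + z_{k+l} (w₁ * w₂)`. -/
noncomputable def harmW : List ℕ → List ℕ → H
  | [], w => word (zListW w)
  | k :: w1, [] => word (zListW (k :: w1))
  | k :: w1, l :: w2 =>
      z k * harmW w1 (l :: w2) + z l * harmW (k :: w1) w2 + z (k + l) * harmW w1 w2
termination_by w1 w2 => w1.length + w2.length
decreasing_by all_goals simp [Nat.lt_succ_iff] <;> omega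

/-- The n-harmonic product on words of `H¹`:
`1 *̄ w = w *̄ 1 = w` and
`z_k w₁ *̄ z_l w₂ = z_k (w₁ *̄ z_l w₂) + z_l (z_k w₁ *̄ w₂) − z_{k+l} (w₁ *̄ w₂)`. -/
noncomputable def nharmW : List ℕ → List ℕ → H
  | [], w => word (zListW w)
  | k :: w1, [] => word (zListW (k :: w1))
  | k :: w1, l :: w2 =>
      z k * nharmW w1 (l :: w2) + z l * nharmW (k :: w1) w2 - z (k + l) * nharmW w1 w2
termination_by w1 w2 => w1.length + w2.length
decreasing_by all_goals simp [Nat.lt_succ_iff] <;> omega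

/-- The harmonic product `*` on `H¹`, extended ℚ-bilinearly. -/
noncomputable def harm (a b : H) : H :=
  Finsupp.sum a.coeff fun w1 c1 =>
    Finsupp.sum b.coeff fun w2 c2 => (c1 * c2) • harmW (toZ w1) (toZ w2)

/-- The n-harmonic product `*̄` on `H¹`, extended ℚ-bilinearly. -/
noncomputable def nharm (a b : H) : H :=
  Finsupp.sum a.coeff fun w1 c1 =>
    Finsupp.sum b.coeff fun w2 c2 => (c1 * c2) • nharmW (toZ w1) (toZ w2)

/-- The letter exchange `τ(x) = y`, `τ(y) = x`. -/
def τ : Letter → Letter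
  | Letter.x => Letter.y
  | Letter.y => Letter.x

/-- `δ(w) = 1` if `w` is the empty word, `0` otherwise. -/
def δ : List Letter → ℚ
  | [] => 1
  | _ :: _ => 0

/-- The shuffle product on words:
`1 ш w = w ш 1 = w` and `u₁w₁ ш u₂w₂ = u₁(w₁ ш u₂w₂) + u₂(u₁w₁ ш w₂)`. -/
noncomputable def shW : List Letter → List Letter → H
  | [], w => word (FreeMonoid.ofList w)
  | u :: w, [] => word (FreeMonoid.ofList (u :: w))
  | u1 :: w1, u2 :: w2 =>
      word (FreeMonoid.of u1) * shW w1 (u2 :: w2) +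
        word (FreeMonoid.of u2) * shW (u1 :: w1) w2
termination_by w1 w2 => w1.length + w2.length
decreasing_by all_goals simp [Nat.lt_succ_iff]

/-- The n-shuffle product on words: `1 ш̄ w = w ш̄ 1 = w` and
`u₁w₁ ш̄ u₂w₂ = u₁(w₁ ш̄ u₂w₂) + u₂(u₁w₁ ш̄ w₂) − δ(w₁)τ(u₁)u₂w₂ − δ(w₂)τ(u₂)u₁w₁`. -/
noncomputable def nshW : List Letter → List Letter → H
  | [], w => word (FreeMonoid.ofList w)
  | u :: w, [] => word (FreeMonoid.ofList (u :: w))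
  | u1 :: w1, u2 :: w2 =>
      word (FreeMonoid.of u1) * nshW w1 (u2 :: w2) +
        word (FreeMonoid.of u2) * nshW (u1 :: w1) w2 -
        δ w1 • word (FreeMonoid.ofList (τ u1 :: u2 :: w2)) -
        δ w2 • word (FreeMonoid.ofList (τ u2 :: u1 :: w1))
termination_by w1 w2 => w1.length + w2.length
decreasing_by all_goals simp [Nat.lt_succ_iff]

/-- The shuffle product `ш` on `H`, extended ℚ-bilinearly. -/
noncomputable def sh (a b : H) : H :=
  Finsupp.sum a.coeff fun w1 c1 =>
    Finsupp.sum b.coeff fun w2 c2 =>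
      (c1 * c2) • shW (FreeMonoid.toList w1) (FreeMonoid.toList w2)

/-- The n-shuffle product `ш̄` on `H`, extended ℚ-bilinearly. -/
noncomputable def nsh (a b : H) : H :=
  Finsupp.sum a.coeff fun w1 c1 =>
    Finsupp.sum b.coeff fun w2 c2 =>
      (c1 * c2) • nshW (FreeMonoid.toList w1) (FreeMonoid.toList w2)

/-- `S₁`: the ℚ-algebra endomorphism of `H` with `S₁(x) = x`, `S₁(y) = x + y`. -/
noncomputable def S1 : H →ₐ[ℚ] H :=
  MonoidAlgebra.lift ℚ H (FreeMonoid Letter)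
    (FreeMonoid.lift fun u => match u with
      | Letter.x => X
      | Letter.y => X + Y)

/-- `S₂`: the ℚ-algebra endomorphism of `H` with `S₂(x) = x`, `S₂(y) = y − x`. -/
noncomputable def S2 : H →ₐ[ℚ] H :=
  MonoidAlgebra.lift ℚ H (FreeMonoid Letter)
    (FreeMonoid.lift fun u => match u with
      | Letter.x => X
      | Letter.y => Y - X)

/-- `S` on a word: `S(1) = 1` and `S(Fy) = S₁(F)y`. -/
noncomputable def SW (w : FreeMonoid Letter) : H :=
  match (FreeMonoid.toList w).getLast? with
  | some Letter.y =>
      S1 (word (FreeMonoid.ofList (FreeMonoid.toList w).dropLast)) * Y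
  | _ => word w

/-- The ℚ-linear map `S : H¹ → H¹` with `S(1) = 1`, `S(Fy) = S₁(F)y`. -/
noncomputable def S (a : H) : H := Finsupp.sum a.coeff fun w c => c • SW w

/-- `S̃` on a word: `S̃(1) = 1` and `S̃(Fy) = S₂(F)y`. -/
noncomputable def StW (w : FreeMonoid Letter) : H :=
  match (FreeMonoid.toList w).getLast? with
  | some Letter.y =>
      S2 (word (FreeMonoid.ofList (FreeMonoid.toList w).dropLast)) * Y
  | _ => word w

/-- The ℚ-linear map `S̃ : H¹ → H¹` with `S̃(1) = 1`, `S̃(Fy) = S₂(F)y`. -/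
noncomputable def St (a : H) : H := Finsupp.sum a.coeff fun w c => c • StW w

/-- The multiple zeta value `ζ(k₁,…,kₙ)`: the sum over strictly decreasing
tuples `m₁ > m₂ > ⋯ > mₙ > 0` of `1/(m₁^{k₁}⋯mₙ^{kₙ})`. -/
noncomputable def mzeta (ks : List ℕ) : ℝ :=
  ∑' m : {f : Fin ks.length → ℕ // (∀ i, 0 < f i) ∧
      ∀ i j : Fin ks.length, i < j → f j < f i},
    ∏ i : Fin ks.length, ((m.1 i : ℝ) ^ ks.get i)⁻¹

/-- The non-strict multiple zeta value `ζ̄(k₁,…,kₙ)`: the sum over weakly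
decreasing tuples `m₁ ≥ m₂ ≥ ⋯ ≥ mₙ > 0` of `1/(m₁^{k₁}⋯mₙ^{kₙ})`. -/
noncomputable def nmzeta (ks : List ℕ) : ℝ :=
  ∑' m : {f : Fin ks.length → ℕ // (∀ i, 0 < f i) ∧
      ∀ i j : Fin ks.length, i ≤ j → f j ≤ f i},
    ∏ i : Fin ks.length, ((m.1 i : ℝ) ^ ks.get i)⁻¹

/-- The evaluation map `Z : H⁰ → ℝ`, `Z(1) = 1`,
`Z(z_{k₁}⋯z_{kₙ}) = ζ(k₁,…,kₙ)` (extended ℚ-linearly to `H`). -/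
noncomputable def Z (a : H) : ℝ := Finsupp.sum a.coeff fun w c => (c : ℝ) * mzeta (toZ w)

/-- The n-evaluation map `Z̄ : H⁰ → ℝ`, `Z̄(1) = 1`,
`Z̄(z_{k₁}⋯z_{kₙ}) = ζ̄(k₁,…,kₙ)` (extended ℚ-linearly to `H`). -/
noncomputable def Zbar (a : H) : ℝ := Finsupp.sum a.coeff fun w c => (c : ℝ) * nmzeta (toZ w)

/-- `i`-fold n-harmonic power: `a^{*̄ 0} = 1`, `a^{*̄ (i+1)} = a *̄ a^{*̄ i}`. -/
noncomputable def nharmPow : ℕ → H → H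
  | 0, _ => 1
  | i + 1, a => nharm a (nharmPow i a)

/-- `i`-fold n-shuffle power: `a^{ш̄ 0} = 1`, `a^{ш̄ (i+1)} = a ш̄ a^{ш̄ i}`. -/
noncomputable def nshPow : ℕ → H → H
  | 0, _ => 1
  | i + 1, a => nsh a (nshPow i a)

end H

open H

/-- `IsRegHom mul ev f` says the ℚ-linear map `f : H → ℝ[T]` is a ℚ-algebra
homomorphism from `(H¹, mul)` to `ℝ[T]` which extends the evaluation map
`ev` on `H⁰` and sends `y` to `T`. -/
def IsRegHom (mul : H → H → H) (ev : H → ℝ) (f : H →ₗ[ℚ] Polynomial ℝ) : Prop :=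
  (∀ a ∈ H1, ∀ b ∈ H1, f (mul a b) = f a * f b) ∧
  (∀ a ∈ H0, f a = Polynomial.C (ev a)) ∧
  f Y = Polynomial.X

/-!
For `a ∈ H` let `∑ cₘ tᵐ` be its non-strict multiple polylogarithm. The partial sums `∑_{m ≤ M} cₘ`
are multiplicative for `*̄` (summation by parts), and the values at `0 ≤ t < 1` are multiplicative
for `ш̄` (apply the product rule for `t d/dt`, which removes the first letter of a word).

On `Fₙ = H⁰ + yH⁰ + ⋯ + yⁿH⁰` both `y *̄ ·` and `y ш̄ ·` are `n + 1` times left multiplication by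
`y`, modulo `Fₙ` itself, so each of these two operators generates `H¹` from `H⁰`. On `H⁰` partial
sums and values at `t` converge to `Z̄` with a power-saving error. Hence on `H¹` the partial sums
are `Z̄^{*̄}(a)` evaluated at the harmonic number `1 + 1/2 + ⋯ + 1/M`, and the values at `t` are
`Z̄^{ш̄}(a)` evaluated at `-log (1 - t)`, both up to an error smaller than any
negative power of the argument.

For `a = w₁ ш̄ w₂ - w₁ *̄ w₂` with `w₂ ∈ H⁰` the values at `t` tend to `0` as `t → 1`: compare both
products with `Z̄(w₂) w₁`, using Abel's theorem for `w₁ *̄ w₂`. So `Z̄^{ш̄}(a)` is a polynomial in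
`-log (1 - t)` tending to `0`, hence zero. If `Z̄^{*̄}(a)` were not constant, the partial sums would
tend to `±∞`, and so would the values at `t`; being constant, it is `0` by Abel's theorem.
-/

section AnalyticPreliminaries

open Filter Topology Asymptotics

lemma hasSum_of_nonneg_of_tendsto_sum {ι β : Type*} {l : Filter ι} [l.NeBot] {f : β → ℝ} {a : ℝ}
    {U : ι → Finset β} (hf : ∀ b, 0 ≤ f b) (hU : Tendsto U l atTop)
    (h : Tendsto (fun i => ∑ b ∈ U i, f b) l (𝓝 a)) : HasSum f a := by
  have hbound (s : Finset β) : ∑ b ∈ s, f b ≤ a := by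
    refine ge_of_tendsto h ?_
    filter_upwards [hU.eventually_ge_atTop s] with i hi
    exact Finset.sum_le_sum_of_subset_of_nonneg hi fun b _ _ => hf b
  have hsum : HasSum f (∑' b, f b) := (summable_of_sum_le hf hbound).hasSum
  rwa [tendsto_nhds_unique h (Tendsto.comp (f := U) hsum hU)]

lemma eventually_nhdsLT_one_mem_Ico : ∀ᶠ t : ℝ in 𝓝[<] 1, t ∈ Set.Ico (0 : ℝ) 1 :=
  Ico_mem_nhdsLT zero_lt_one

lemma tendsto_inv_one_sub_atTop : Tendsto (fun t : ℝ => (1 - t)⁻¹) (𝓝[<] 1) atTop := by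
  refine tendsto_inv_nhdsGT_zero.comp (tendsto_nhdsWithin_iff.2 ⟨?_, ?_⟩)
  · have : Tendsto (fun t : ℝ => 1 - t) (𝓝 1) (𝓝 (1 - 1)) := tendsto_const_nhds.sub tendsto_id
    exact (sub_self (1 : ℝ) ▸ this).mono_left nhdsWithin_le_nhds
  · filter_upwards [self_mem_nhdsWithin] with t ht using sub_pos.2 (Set.mem_Iio.1 ht)

lemma tendsto_neg_log_one_sub_atTop :
    Tendsto (fun t : ℝ => -Real.log (1 - t)) (𝓝[<] 1) atTop :=
  (Real.tendsto_log_atTop.comp tendsto_inv_one_sub_atTop).congr fun t => Real.log_inv (1 - t)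

section Summation

variable {d c w : ℕ → ℝ} {z ε δ : ℝ}

lemma abs_tsum_mul_sub_le (hd : HasSum d z) (hw : Summable fun m => |d m| * w m)
    (hc : ∀ m, |c m - 1| ≤ w m * δ) :
    |∑' m, d m * c m - z| ≤ (∑' m, |d m| * w m) * δ := by
  have hle (m : ℕ) : ‖d m * (c m - 1)‖ ≤ |d m| * w m * δ := by
    rw [Real.norm_eq_abs, abs_mul, mul_assoc]
    exact mul_le_mul_of_nonneg_left (hc m) (abs_nonneg _)
  have hsum : Summable fun m => d m * (c m - 1) := (hw.mul_right δ).of_norm_bounded hle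
  have hsplit : ∑' m, d m * c m = ∑' m, d m * (c m - 1) + z := by
    rw [← hd.tsum_eq, ← hsum.tsum_add hd.summable]
    exact tsum_congr fun m => by ring
  rw [hsplit, add_sub_cancel_right, ← tsum_mul_right]
  exact tsum_of_norm_bounded (hw.mul_right δ).hasSum hle

lemma isBigO_sum_range_sub (hε : 0 ≤ ε) (hw : Summable fun m => |d m| * (m : ℝ) ^ ε)
    (hd : HasSum d z) :
    (fun M : ℕ => ∑ m ∈ Finset.range (M + 1), d m - z) =O[atTop] fun M : ℕ => (M : ℝ) ^ (-ε) := by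
  refine IsBigO.of_bound (∑' m, |d m| * (m : ℝ) ^ ε) ?_
  filter_upwards [eventually_gt_atTop 0] with M hM
  have hM' : (0 : ℝ) < M := mod_cast hM
  have hsum : ∑ m ∈ Finset.range (M + 1), d m = ∑' m, d m * if m < M + 1 then 1 else 0 := by
    rw [tsum_eq_sum (s := Finset.range (M + 1)) fun m hm => by simp_all]
    exact Finset.sum_congr rfl fun m hm => by simp_all
  rw [Real.norm_of_nonneg (by positivity : (0 : ℝ) ≤ (M : ℝ) ^ (-ε)), hsum]
  refine abs_tsum_mul_sub_le hd hw fun m => ?_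
  rw [Real.rpow_neg hM'.le, ← div_eq_mul_inv, ← Real.div_rpow m.cast_nonneg hM'.le]
  split_ifs with hm
  · simp only [sub_self, abs_zero]; positivity
  · rw [zero_sub, abs_neg, abs_one]
    refine Real.one_le_rpow ((one_le_div hM').2 ?_) hε
    exact_mod_cast (by omega : M ≤ m)

lemma one_sub_pow_le_mul_rpow {t : ℝ} (ht : t ∈ Set.Icc (0 : ℝ) 1) (hε : 0 ≤ ε) (hε1 : ε ≤ 1)
    (m : ℕ) : 1 - t ^ m ≤ (m * (1 - t)) ^ ε := by
  have hnonneg : 0 ≤ m * (1 - t) := mul_nonneg m.cast_nonneg (sub_nonneg.2 ht.2)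
  have hpow : 0 ≤ t ^ m := pow_nonneg ht.1 m
  rcases le_total 1 (m * (1 - t)) with h | h
  · linarith [Real.one_le_rpow h hε]
  · calc 1 - t ^ m ≤ m * (1 - t) := by
          linarith [one_add_mul_le_pow (by linarith [ht.1] : (-2 : ℝ) ≤ t - 1) m,
            congrArg (· ^ m) (add_sub_cancel 1 t)]
      _ ≤ (m * (1 - t)) ^ ε := Real.self_le_rpow_of_le_one hnonneg h hε1

lemma isBigO_tsum_mul_pow_sub (hε : 0 ≤ ε) (hε1 : ε ≤ 1)
    (hw : Summable fun m => |d m| * (m : ℝ) ^ ε) (hd : HasSum d z) :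
    (fun t : ℝ => ∑' m, d m * t ^ m - z) =O[𝓝[<] 1] fun t => (1 - t)⁻¹ ^ (-ε) := by
  refine IsBigO.of_bound (∑' m, |d m| * (m : ℝ) ^ ε) ?_
  filter_upwards [eventually_nhdsLT_one_mem_Ico] with t ht
  have ht' : 0 < 1 - t := sub_pos.2 ht.2
  rw [Real.rpow_neg (inv_nonneg.2 ht'.le), Real.inv_rpow ht'.le, inv_inv,
    Real.norm_of_nonneg (by positivity : (0 : ℝ) ≤ (1 - t) ^ ε)]
  refine abs_tsum_mul_sub_le hd hw fun m => ?_
  rw [← Real.mul_rpow m.cast_nonneg ht'.le, abs_sub_comm,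
    abs_of_nonneg (sub_nonneg.2 (pow_le_one₀ ht.1 ht.2.le))]
  exact one_sub_pow_le_mul_rpow ⟨ht.1, ht.2.le⟩ hε hε1 m

lemma hasSum_one_sub_mul_sum_range_mul_pow {t : ℝ} (ht : t ∈ Set.Ico (0 : ℝ) 1)
    (hd : Summable fun m => d m * t ^ m) :
    HasSum (fun M => (1 - t) * ((∑ m ∈ Finset.range (M + 1), d m) * t ^ M))
      (∑' m, d m * t ^ m) := by
  have hgeom : Summable fun m : ℕ => ‖t ^ m‖ := by
    simpa [abs_of_nonneg ht.1] using summable_geometric_of_lt_one ht.1 ht.2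
  have hconv (M : ℕ) : ∑ k ∈ Finset.range (M + 1), d k * t ^ k * t ^ (M - k)
      = (∑ m ∈ Finset.range (M + 1), d m) * t ^ M := by
    rw [Finset.sum_mul]
    refine Finset.sum_congr rfl fun k hk => ?_
    rw [mul_assoc, ← pow_add, Nat.add_sub_cancel' (by simpa [Nat.lt_succ_iff] using hk)]
  have hprod := tsum_mul_tsum_eq_tsum_sum_range_of_summable_norm hd.norm hgeom
  have hsum := (summable_norm_sum_mul_range_of_summable_norm hd.norm hgeom).of_norm
  simp only [hconv, tsum_geometric_of_lt_one ht.1 ht.2] at hprod hsum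
  have := hsum.hasSum.mul_left (1 - t)
  rwa [← hprod, mul_comm, mul_assoc, inv_mul_cancel₀ (sub_pos.2 ht.2).ne', mul_one] at this

lemma tendsto_tsum_mul_pow_atTop (hd : ∀ t ∈ Set.Ico (0 : ℝ) 1, Summable fun m => d m * t ^ m)
    (h : Tendsto (fun M => ∑ m ∈ Finset.range (M + 1), d m) atTop atTop) :
    Tendsto (fun t : ℝ => ∑' m, d m * t ^ m) (𝓝[<] 1) atTop := by
  refine tendsto_atTop.2 fun K => ?_
  obtain ⟨N, hN⟩ := eventually_atTop.1 (h.eventually_ge_atTop (K + 1))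
  set S : ℕ → ℝ := fun M => ∑ m ∈ Finset.range (M + 1), d m
  set q : ℕ → ℝ := fun M => min (S M - (K + 1)) 0
  have hq (M : ℕ) (hM : M ∉ Finset.range N) : q M = 0 :=
    min_eq_right (sub_nonneg.2 (hN M (by simpa using hM)))
  have hlower : ∀ t ∈ Set.Ico (0 : ℝ) 1,
      K + 1 + (1 - t) * ∑ M ∈ Finset.range N, q M * t ^ M ≤ ∑' m, d m * t ^ m := by
    intro t ht
    have hconst : HasSum (fun M : ℕ => (1 - t) * ((K + 1) * t ^ M)) (K + 1) := by
      have := (hasSum_geometric_of_lt_one ht.1 ht.2).mul_left ((1 - t) * (K + 1))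
      rw [mul_right_comm, mul_inv_cancel₀ (sub_pos.2 ht.2).ne', one_mul] at this
      simpa only [mul_assoc] using this
    have hpoly : HasSum (fun M => (1 - t) * (q M * t ^ M))
        ((1 - t) * ∑ M ∈ Finset.range N, q M * t ^ M) :=
      (hasSum_sum_of_ne_finset_zero fun M hM => by rw [hq M hM, zero_mul]).mul_left (1 - t)
    refine hasSum_le (fun M => ?_) (hconst.add hpoly)
      (hasSum_one_sub_mul_sum_range_mul_pow ht (hd t ht))
    rw [← mul_add, ← add_mul]
    refine mul_le_mul_of_nonneg_left (mul_le_mul_of_nonneg_right ?_ (pow_nonneg ht.1 M))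
      (sub_nonneg.2 ht.2.le)
    linarith [min_le_left (S M - (K + 1)) 0]
  have hlim : Tendsto (fun t : ℝ => K + 1 + (1 - t) * ∑ M ∈ Finset.range N, q M * t ^ M)
      (𝓝[<] 1) (𝓝 (K + 1)) := by
    have hcont : Continuous fun t : ℝ => K + 1 + (1 - t) * ∑ M ∈ Finset.range N, q M * t ^ M := by
      fun_prop
    have := hcont.tendsto 1
    rw [sub_self, zero_mul, add_zero] at this
    exact this.mono_left nhdsWithin_le_nhds
  filter_upwards [eventually_nhdsLT_one_mem_Ico,
    hlim.eventually (eventually_ge_nhds (lt_add_one K))] with t ht hK using hK.trans (hlower t ht)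

end Summation

section Polynomial

variable {α : Type*} {l : Filter α} {u : α → ℝ}

lemma superpolynomialDecay_of_isBigO_log {v f : α → ℝ} {ε : ℝ} (hv : Tendsto v l atTop)
    (hu : u =O[l] fun a => Real.log (v a)) (hε : 0 < ε) (hf : f =O[l] fun a => v a ^ (-ε)) :
    SuperpolynomialDecay l u f := by
  intro n
  refine ((hu.pow n).mul hf).trans_tendsto ?_
  have hlog := ((isLittleO_log_rpow_rpow_atTop n hε).comp_tendsto hv).tendsto_div_nhds_zero
  refine hlog.congr' ?_
  filter_upwards [hv.eventually_ge_atTop 0] with a ha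
  simp only [Function.comp_apply, Real.rpow_natCast, Real.rpow_neg ha, div_eq_mul_inv]

lemma tendsto_zero_of_superpolynomialDecay {f : α → ℝ} (hf : SuperpolynomialDecay l u f) :
    Tendsto f l (𝓝 0) := by
  simpa using hf 0

lemma superpolynomialDecay_mul_of_sub_eval {e d : α → ℝ} (P : Polynomial ℝ)
    (he : SuperpolynomialDecay l u fun a => e a - P.eval (u a))
    (hd : SuperpolynomialDecay l u d) : SuperpolynomialDecay l u (e * d) := by
  refine ((he.mul hd).add (hd.polynomial_mul P)).congr fun a => ?_
  simp only [Pi.add_apply, Pi.mul_apply]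
  ring

lemma polynomial_eq_C_of_tendsto_eval [l.NeBot] {P : Polynomial ℝ} {c : ℝ}
    (hu : Tendsto u l atTop) (h : Tendsto (fun a => P.eval (u a)) l (𝓝 c)) :
    P = Polynomial.C c := by
  have hdeg : P.degree ≤ 0 := by
    by_contra! hdeg
    exact not_tendsto_nhds_of_tendsto_atTop ((P.abs_tendsto_atTop hdeg).comp hu) _ h.abs
  rw [Polynomial.eq_C_of_degree_le_zero hdeg] at h ⊢
  simp only [Polynomial.eval_C, tendsto_const_nhds_iff] at h
  rw [h]

end Polynomial

section AbelianPolynomial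

variable {u d : ℕ → ℝ} {P : Polynomial ℝ}

lemma leadingCoeff_neg_of_tendsto_tsum_mul_pow {a : ℝ} (hu : Tendsto u atTop atTop)
    (hd : ∀ t ∈ Set.Ico (0 : ℝ) 1, Summable fun m => d m * t ^ m)
    (hP : Tendsto (fun M => ∑ m ∈ Finset.range (M + 1), d m - P.eval (u M)) atTop (𝓝 0))
    (habel : Tendsto (fun t : ℝ => ∑' m, d m * t ^ m) (𝓝[<] 1) (𝓝 a)) (hdeg : 0 < P.degree) :
    P.leadingCoeff < 0 := by
  by_contra! hlead
  have heval := (P.tendsto_atTop_of_leadingCoeff_nonneg hdeg hlead).comp hu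
  have hsum : Tendsto (fun M => ∑ m ∈ Finset.range (M + 1), d m) atTop atTop :=
    (hP.add_atTop heval).congr fun M => sub_add_cancel _ _
  exact not_tendsto_nhds_of_tendsto_atTop (tendsto_tsum_mul_pow_atTop hd hsum) _ habel

lemma polynomial_eq_C_of_tendsto_tsum_mul_pow {a : ℝ} (hu : Tendsto u atTop atTop)
    (hd : ∀ t ∈ Set.Ico (0 : ℝ) 1, Summable fun m => d m * t ^ m)
    (hP : Tendsto (fun M => ∑ m ∈ Finset.range (M + 1), d m - P.eval (u M)) atTop (𝓝 0))
    (habel : Tendsto (fun t : ℝ => ∑' m, d m * t ^ m) (𝓝[<] 1) (𝓝 a)) : P = Polynomial.C a := by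
  have hdeg : P.degree ≤ 0 := by
    by_contra! hdeg
    have hneg := leadingCoeff_neg_of_tendsto_tsum_mul_pow hu hd hP habel hdeg
    have hpos := leadingCoeff_neg_of_tendsto_tsum_mul_pow (d := -d) (P := -P) (a := -a) hu
      (fun t ht => by simpa using (hd t ht).neg) (by simpa [neg_add_eq_sub] using hP.neg)
      (by simpa [tsum_neg] using habel.neg) (by rwa [Polynomial.degree_neg])
    rw [Polynomial.leadingCoeff_neg] at hpos
    linarith
  rw [Polynomial.eq_C_of_degree_le_zero hdeg] at hP ⊢
  simp only [Polynomial.eval_C, tendsto_sub_nhds_zero_iff] at hP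
  have hlim := Real.tendsto_tsum_powerSeries_nhdsWithin_lt ((tendsto_add_atTop_iff_nat 1).1 hP)
  rw [tendsto_nhds_unique hlim habel]

end AbelianPolynomial

end AnalyticPreliminaries

namespace H

section Words

/-- The word of `H` spelled by a list of letters; lists of letters, unlike elements of the free
monoid, allow definitions and proofs by structural recursion. -/
noncomputable def ofLetters (l : List Letter) : H := word (FreeMonoid.ofList l)

lemma ofLetters_nil : ofLetters [] = 1 := rfl

lemma ofLetters_append (l₁ l₂ : List Letter) :
    ofLetters (l₁ ++ l₂) = ofLetters l₁ * ofLetters l₂ := by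
  simp [ofLetters, word, FreeMonoid.ofList_append, MonoidAlgebra.single_mul_single]

lemma ofLetters_cons (u : Letter) (l : List Letter) :
    ofLetters (u :: l) = word (FreeMonoid.of u) * ofLetters l :=
  ofLetters_append [u] l

variable {V : Type*} [AddCommGroup V] [Module ℚ V]

/-- The `ℚ`-linear extension to `H` of a function on words. -/
noncomputable def wordLift (φ : List Letter → V) : H →ₗ[ℚ] V :=
  Finsupp.linearCombination ℚ (φ ∘ FreeMonoid.toList) ∘ₗ
    (MonoidAlgebra.coeffLinearEquiv ℚ).toLinearMap

lemma wordLift_apply (φ : List Letter → V) (a : H) :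
    wordLift φ a = a.coeff.sum fun w c => c • φ w.toList := rfl

@[simp]
lemma wordLift_ofLetters (φ : List Letter → V) (l : List Letter) :
    wordLift φ (ofLetters l) = φ l := by
  simp [wordLift_apply, ofLetters, word]

lemma mem_of_ofLetters_mem {N : Submodule ℚ H} (h : ∀ l, ofLetters l ∈ N) (a : H) : a ∈ N := by
  induction a using MonoidAlgebra.induction_on with
  | of w => exact h w.toList
  | add a b ha hb => exact N.add_mem ha hb
  | smul r a ha => exact N.smul_mem r ha

lemma linearMap_ext {f g : H →ₗ[ℚ] V} (h : ∀ l, f (ofLetters l) = g (ofLetters l)) : f = g :=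
  LinearMap.ext fun a => mem_of_ofLetters_mem (N := LinearMap.eqLocus f g) h a

end Words

section Subspaces

/-- A word belongs to `H¹` when it is empty or ends in `y`, i.e. when its last letter is not `x`. -/
def IsH1Word (l : List Letter) : Prop := l.getLast? ≠ some Letter.x

lemma isH1Word_nil : IsH1Word [] := by simp [IsH1Word]

lemma isH1Word_singleton_y : IsH1Word [Letter.y] := by simp [IsH1Word]

lemma isH1Word_cons {u : Letter} {l : List Letter} (hl : l ≠ []) :
    IsH1Word (u :: l) ↔ IsH1Word l := by
  cases l with
  | nil => contradiction
  | cons v l => simp [IsH1Word, List.getLast?_cons_cons]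

lemma isH1Word_append_y (l : List Letter) : IsH1Word (l ++ [Letter.y]) := by
  simp [IsH1Word]

lemma IsH1Word.tail {u : Letter} {l : List Letter} (h : IsH1Word (u :: l)) : IsH1Word l := by
  rcases eq_or_ne l [] with rfl | hl
  · exact isH1Word_nil
  · exact (isH1Word_cons hl).1 h

lemma IsH1Word.eq_y {u : Letter} (h : IsH1Word [u]) : u = Letter.y := by
  cases u <;> simp_all [IsH1Word]

/-- The left ideal `Hy` of `H`. -/
noncomputable def Hy : Submodule ℚ H := LinearMap.range (LinearMap.mulRight ℚ Y)

lemma Hy_le_H1 : Hy ≤ H1 := le_sup_left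

lemma one_mem_H1 : (1 : H) ∈ H1 :=
  (le_sup_right : _ ≤ H1) (Submodule.mem_span_singleton_self 1)

lemma one_mem_H0 : (1 : H) ∈ H0 :=
  (le_sup_right : _ ≤ H0) (Submodule.mem_span_singleton_self 1)

lemma mul_mem_Hy (a : H) {b : H} (hb : b ∈ Hy) : a * b ∈ Hy := by
  obtain ⟨c, rfl⟩ := hb
  exact ⟨a * c, mul_assoc a c Y⟩

lemma Y_mem_Hy : Y ∈ Hy := ⟨1, one_mul Y⟩

lemma Y_mem_H1 : Y ∈ H1 := Hy_le_H1 Y_mem_Hy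

lemma X_mul_mem_H0 {b : H} (hb : b ∈ Hy) : X * b ∈ H0 := by
  obtain ⟨c, rfl⟩ := hb
  exact (le_sup_left : _ ≤ H0) ⟨c, mul_assoc X c Y⟩

lemma IsH1Word.mem_Hy {l : List Letter} (h : IsH1Word l) (hl : l ≠ []) : ofLetters l ∈ Hy := by
  obtain ⟨r, u, rfl⟩ := (List.eq_nil_or_concat' l).resolve_left hl
  cases u with
  | x => simp [IsH1Word] at h
  | y => rw [ofLetters_append]; exact mul_mem_Hy _ Y_mem_Hy

lemma IsH1Word.mem_H1 {l : List Letter} (h : IsH1Word l) : ofLetters l ∈ H1 := by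
  rcases eq_or_ne l [] with rfl | hl
  · exact one_mem_H1
  · exact Hy_le_H1 (h.mem_Hy hl)

lemma H1_le_of_words {N : Submodule ℚ H} (h : ∀ l, IsH1Word l → ofLetters l ∈ N) : H1 ≤ N := by
  refine sup_le ?_ (by simpa [ofLetters_nil] using h [] isH1Word_nil)
  rintro _ ⟨a, rfl⟩
  refine mem_of_ofLetters_mem (N := N.comap (LinearMap.mulRight ℚ Y)) (fun l => ?_) a
  rw [Submodule.mem_comap, LinearMap.mulRight_apply]
  exact ofLetters_append l [Letter.y] ▸ h _ (isH1Word_append_y l)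

lemma H0_le_of_words {N : Submodule ℚ H} (h1 : 1 ∈ N)
    (h : ∀ l, IsH1Word l → l ≠ [] → ofLetters (Letter.x :: l) ∈ N) : H0 ≤ N := by
  refine sup_le ?_ (by simpa using h1)
  rintro _ ⟨a, rfl⟩
  refine mem_of_ofLetters_mem (N := N.comap (LinearMap.mulRight ℚ Y ∘ₗ LinearMap.mulLeft ℚ X))
    (fun l => ?_) a
  have := h (l ++ [Letter.y]) (isH1Word_append_y l) (by simp)
  rw [ofLetters_cons, ofLetters_append, ← mul_assoc] at this
  exact this

lemma H0_le_H1 : H0 ≤ H1 :=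
  H0_le_of_words one_mem_H1 fun _ hl hne => ((isH1Word_cons hne).2 hl).mem_H1

lemma Y_mul_mem_Hy {b : H} (hb : b ∈ H1) : Y * b ∈ Hy := by
  have : H1 ≤ Hy.comap (LinearMap.mulLeft ℚ Y) := H1_le_of_words fun l hl => by
    rcases eq_or_ne l [] with rfl | hne
    · simpa [ofLetters_nil] using Y_mem_Hy
    · exact mul_mem_Hy Y (hl.mem_Hy hne)
  exact this hb

lemma bilinear_mem_of_words {V : Type*} [AddCommGroup V] [Module ℚ V] (B : H →ₗ[ℚ] H →ₗ[ℚ] V)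
    {N : Submodule ℚ V}
    (h : ∀ l₁ l₂, IsH1Word l₁ → IsH1Word l₂ → B (ofLetters l₁) (ofLetters l₂) ∈ N)
    {a b : H} (ha : a ∈ H1) (hb : b ∈ H1) : B a b ∈ N := by
  have hspan : H1 ≤ Submodule.span ℚ (ofLetters '' {l | IsH1Word l}) :=
    H1_le_of_words fun l hl => Submodule.subset_span ⟨l, hl, rfl⟩
  refine LinearMap.BilinMap.apply_apply_mem_of_mem_span N _ _ B ?_ a b (hspan ha) (hspan hb)
  rintro _ ⟨l₁, h₁, rfl⟩ _ ⟨l₂, h₂, rfl⟩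
  exact h l₁ l₂ h₁ h₂

lemma map_eq_mul_of_words {A : Type*} [Ring A] [Algebra ℚ A] {E : H →ₗ[ℚ] A}
    {B : H →ₗ[ℚ] H →ₗ[ℚ] H}
    (h : ∀ l₁ l₂, IsH1Word l₁ → IsH1Word l₂ →
      E (B (ofLetters l₁) (ofLetters l₂)) = E (ofLetters l₁) * E (ofLetters l₂))
    {a b : H} (ha : a ∈ H1) (hb : b ∈ H1) : E (B a b) = E a * E b := by
  have := bilinear_mem_of_words (B.compr₂ E - (LinearMap.mul ℚ A).compl₁₂ E E) (N := ⊥)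
    (fun l₁ l₂ h₁ h₂ => by simpa [sub_eq_zero] using h l₁ l₂ h₁ h₂) ha hb
  simpa [sub_eq_zero] using this

end Subspaces

section Generation

/-- The subspaces `H⁰ + yH⁰ + ⋯ + yⁿH⁰`, which exhaust `H¹`. -/
noncomputable def yFiltration : ℕ → Submodule ℚ H
  | 0 => H0
  | n + 1 => H0 ⊔ (yFiltration n).map (LinearMap.mulLeft ℚ Y)

lemma H0_le_yFiltration : ∀ n, H0 ≤ yFiltration n
  | 0 => le_rfl
  | _ + 1 => le_sup_left

lemma Y_mul_mem_yFiltration {n : ℕ} {a : H} (ha : a ∈ yFiltration n) :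
    Y * a ∈ yFiltration (n + 1) :=
  (le_sup_right : _ ≤ yFiltration (n + 1)) (Submodule.mem_map_of_mem ha)

lemma yFiltration_le_H1 (n : ℕ) : yFiltration n ≤ H1 := by
  induction n with
  | zero => exact H0_le_H1
  | succ n ih =>
    refine sup_le H0_le_H1 ?_
    rintro _ ⟨a, ha, rfl⟩
    exact Hy_le_H1 (Y_mul_mem_Hy (ih ha))

lemma IsH1Word.exists_mem_yFiltration {l : List Letter} (h : IsH1Word l) :
    ∃ n, ofLetters l ∈ yFiltration n := by
  induction l with
  | nil => exact ⟨0, one_mem_H0⟩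
  | cons u l ih =>
    cases u with
    | x =>
      have hl : l ≠ [] := by rintro rfl; simp [IsH1Word] at h
      exact ⟨0, ofLetters_cons .x l ▸ X_mul_mem_H0 (h.tail.mem_Hy hl)⟩
    | y =>
      obtain ⟨n, hn⟩ := ih h.tail
      exact ⟨n + 1, ofLetters_cons .y l ▸ Y_mul_mem_yFiltration hn⟩

/-- Modulo `H⁰`, the operator `m` is left multiplication by `y` on `H⁰` and inserts one more `y`
on `yH¹`; both `y *̄ ·` and `y ш̄ ·` have this property. -/
structure IsYInsertion (m : H →ₗ[ℚ] H) : Prop where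
  sub_Y_mul_mem : ∀ a ∈ H0, m a - Y * a ∈ H0
  Y_mul_sub_mem : ∀ b ∈ H1, m (Y * b) - Y * (Y * b) - Y * m b ∈ H0

variable {m : H →ₗ[ℚ] H}

lemma IsYInsertion.sub_smul_mem_yFiltration (hm : IsYInsertion m) (n : ℕ) :
    ∀ a ∈ yFiltration n, m a - (n + 1 : ℚ) • (Y * a) ∈ yFiltration n := by
  induction n with
  | zero => simpa [yFiltration] using hm.sub_Y_mul_mem
  | succ n ih =>
    rintro _ ha
    obtain ⟨c, hc, _, ⟨b, hb, rfl⟩, rfl⟩ := Submodule.mem_sup.1 ha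
    have hc' : m c - Y * c - (n + 1 : ℚ) • (Y * c) ∈ yFiltration (n + 1) :=
      sub_mem (H0_le_yFiltration _ (hm.sub_Y_mul_mem c hc))
        (Submodule.smul_mem _ _ (Y_mul_mem_yFiltration (H0_le_yFiltration n hc)))
    have hb' : m (Y * b) - Y * (Y * b) - Y * m b + Y * (m b - (n + 1 : ℚ) • (Y * b)) ∈
        yFiltration (n + 1) :=
      add_mem (H0_le_yFiltration _ (hm.Y_mul_sub_mem b (yFiltration_le_H1 n hb)))
        (Y_mul_mem_yFiltration (ih b hb))
    convert add_mem hc' hb' using 1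
    simp only [LinearMap.mulLeft_apply, map_add, mul_add, mul_sub, mul_smul_comm]
    push_cast
    module

theorem IsYInsertion.H1_le (hm : IsYInsertion m) {N : Submodule ℚ H} (hN : H0 ≤ N)
    (hmN : ∀ a ∈ H1, a ∈ N → m a ∈ N) : H1 ≤ N := by
  have hfil (n : ℕ) : yFiltration n ≤ N := by
    induction n with
    | zero => exact hN
    | succ n ih =>
      refine sup_le hN ?_
      rintro _ ⟨a, ha, rfl⟩
      have hmem := sub_mem (hmN a (yFiltration_le_H1 n ha) (ih ha))
        (ih (hm.sub_smul_mem_yFiltration n a ha))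
      rw [sub_sub_cancel] at hmem
      exact (Submodule.smul_mem_iff N n.cast_add_one_ne_zero).1 hmem
  refine H1_le_of_words fun l hl => ?_
  obtain ⟨n, hn⟩ := hl.exists_mem_yFiltration
  exact hfil n hn

end Generation

section Products

/-- The n-shuffle product as a bilinear map. -/
noncomputable def nshLin : H →ₗ[ℚ] H →ₗ[ℚ] H :=
  wordLift fun l₁ => wordLift fun l₂ => nshW l₁ l₂

/-- The n-harmonic product as a bilinear map. -/
noncomputable def nharmLin : H →ₗ[ℚ] H →ₗ[ℚ] H :=
  wordLift fun l₁ => wordLift fun l₂ => nharmW (toZ (.ofList l₁)) (toZ (.ofList l₂))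

/-- The n-evaluation map as a linear map on all of `H`. -/
noncomputable def zbarLin : H →ₗ[ℚ] ℝ := wordLift fun l => nmzeta (toZ (.ofList l))

lemma nshLin_apply (a b : H) : nshLin a b = nsh a b := by
  simp [nshLin, nsh, wordLift_apply, Finsupp.sum, mul_smul, Finset.smul_sum]

lemma nharmLin_apply (a b : H) : nharmLin a b = nharm a b := by
  simp [nharmLin, nharm, wordLift_apply, Finsupp.sum, mul_smul, Finset.smul_sum]

lemma zbarLin_apply (a : H) : zbarLin a = Zbar a := by
  simp [zbarLin, Zbar, wordLift_apply, Rat.smul_def]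

lemma nshLin_ofLetters (l₁ l₂ : List Letter) :
    nshLin (ofLetters l₁) (ofLetters l₂) = nshW l₁ l₂ := by
  simp [nshLin]

lemma nshW_nil_left (l : List Letter) : nshW [] l = ofLetters l := by rw [nshW]; rfl

lemma nshW_nil_right (l : List Letter) : nshW l [] = ofLetters l := by cases l <;> rw [nshW] <;> rfl

lemma nshW_cons_cons (u₁ u₂ : Letter) (w₁ w₂ : List Letter) :
    nshW (u₁ :: w₁) (u₂ :: w₂) =
      word (.of u₁) * nshW w₁ (u₂ :: w₂) + word (.of u₂) * nshW (u₁ :: w₁) w₂ -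
        δ w₁ • (word (.of (τ u₁)) * ofLetters (u₂ :: w₂)) -
        δ w₂ • (word (.of (τ u₂)) * ofLetters (u₁ :: w₁)) := by
  rw [nshW, ← ofLetters_cons, ← ofLetters_cons]; rfl

lemma nshW_mem_Hy {l₁ l₂ : List Letter} (h₁ : IsH1Word l₁) (h₂ : IsH1Word l₂)
    (hne : l₁ ≠ [] ∨ l₂ ≠ []) : nshW l₁ l₂ ∈ Hy := by
  fun_induction nshW l₁ l₂ with
  | case1 l => exact h₂.mem_Hy (by simpa using hne)
  | case2 u l => exact h₁.mem_Hy (by simp)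
  | case3 u₁ w₁ u₂ w₂ ih₁ ih₂ =>
    refine sub_mem (sub_mem (add_mem (mul_mem_Hy _ (ih₁ h₁.tail h₂ (by simp)))
      (mul_mem_Hy _ (ih₂ h₁ h₂.tail (by simp)))) ?_) ?_
    · exact Submodule.smul_mem _ _ (((isH1Word_cons (by simp)).2 h₂).mem_Hy (by simp))
    · exact Submodule.smul_mem _ _ (((isH1Word_cons (by simp)).2 h₁).mem_Hy (by simp))

lemma nshW_mem_H1 {l₁ l₂ : List Letter} (h₁ : IsH1Word l₁) (h₂ : IsH1Word l₂) :
    nshW l₁ l₂ ∈ H1 := by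
  by_cases hne : l₁ ≠ [] ∨ l₂ ≠ []
  · exact Hy_le_H1 (nshW_mem_Hy h₁ h₂ hne)
  · obtain ⟨rfl, rfl⟩ : l₁ = [] ∧ l₂ = [] := by simpa using hne
    exact nshW_nil_left [] ▸ one_mem_H1

lemma nsh_mem_H1 {a b : H} (ha : a ∈ H1) (hb : b ∈ H1) : nsh a b ∈ H1 :=
  nshLin_apply a b ▸ bilinear_mem_of_words nshLin
    (fun l₁ l₂ h₁ h₂ => nshLin_ofLetters l₁ l₂ ▸ nshW_mem_H1 h₁ h₂) ha hb

lemma δ_of_ne_nil {l : List Letter} (hl : l ≠ []) : δ l = 0 := by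
  cases l with
  | nil => contradiction
  | cons u l => rfl

lemma nshW_y_x_cons (w : List Letter) (hw : w ≠ []) :
    nshW [.y] (.x :: w) = Y * ofLetters (.x :: w) +
      (X * nshW [.y] w - X * ofLetters (.x :: w)) := by
  rw [nshW_cons_cons, nshW_nil_left, δ_of_ne_nil hw, zero_smul, sub_zero, δ, one_smul]
  exact add_sub_assoc _ _ _

lemma nshW_y_y_cons (w : List Letter) :
    nshW [.y] (.y :: w) = Y * ofLetters (.y :: w) + Y * nshW [.y] w -
      (X * ofLetters (.y :: w) + δ w • (X * Y)) := by
  rw [nshW_cons_cons, nshW_nil_left, sub_sub, δ, one_smul]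
  rfl

lemma nshLin_Y_ofLetters (l : List Letter) : nshLin Y (ofLetters l) = nshW [.y] l :=
  nshLin_ofLetters [.y] l

lemma isYInsertion_nshLin : IsYInsertion (nshLin Y) where
  sub_Y_mul_mem := by
    suffices H0 ≤ H0.comap (nshLin Y - LinearMap.mulLeft ℚ Y) from this
    refine H0_le_of_words ?_ fun l hl hne => ?_
    · have h1 : nshLin Y 1 = Y := (nshLin_Y_ofLetters []).trans (nshW_nil_right [.y])
      simp [h1]
    · rw [Submodule.mem_comap, LinearMap.sub_apply, LinearMap.mulLeft_apply, nshLin_Y_ofLetters,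
        nshW_y_x_cons l hne, add_sub_cancel_left]
      exact sub_mem (X_mul_mem_H0 (nshW_mem_Hy isH1Word_singleton_y hl (by simp)))
        (X_mul_mem_H0 (((isH1Word_cons hne).2 hl).mem_Hy (by simp)))
  Y_mul_sub_mem := by
    suffices H1 ≤ H0.comap (nshLin Y ∘ₗ LinearMap.mulLeft ℚ Y -
        LinearMap.mulLeft ℚ Y ∘ₗ LinearMap.mulLeft ℚ Y - LinearMap.mulLeft ℚ Y ∘ₗ nshLin Y)
      from this
    refine H1_le_of_words fun l hl => ?_
    have hcons : Y * ofLetters l = ofLetters (.y :: l) := (ofLetters_cons .y l).symm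
    have hmem : ofLetters (.y :: l) ∈ Hy := hcons ▸ Y_mul_mem_Hy hl.mem_H1
    simp only [Submodule.mem_comap, LinearMap.sub_apply, LinearMap.comp_apply,
      LinearMap.mulLeft_apply, hcons, nshLin_Y_ofLetters, nshW_y_y_cons]
    rw [sub_sub, sub_right_comm, sub_self, zero_sub]
    exact neg_mem (add_mem (X_mul_mem_H0 hmem)
      (Submodule.smul_mem _ _ (X_mul_mem_H0 Y_mem_Hy)))

lemma z_one : z 1 = Y := rfl

lemma z_succ {k : ℕ} (hk : 0 < k) : z (k + 1) = X * z k := by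
  obtain ⟨j, rfl⟩ := Nat.exists_eq_succ_of_ne_zero hk.ne'
  exact ofLetters_cons .x _

lemma z_mul_mem_Hy (k : ℕ) {b : H} (hb : b ∈ H1) : z k * b ∈ Hy := by
  have hz : z k = ofLetters (List.replicate (k - 1) .x) * Y := ofLetters_append _ [.y]
  rw [hz, mul_assoc]
  exact mul_mem_Hy _ (Y_mul_mem_Hy hb)

lemma z_succ_mul_mem_H0 {k : ℕ} (hk : 0 < k) {b : H} (hb : b ∈ H1) : z (k + 1) * b ∈ H0 := by
  rw [z_succ hk, mul_assoc]
  exact X_mul_mem_H0 (z_mul_mem_Hy k hb)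

lemma word_zListW_nil : word (zListW []) = 1 := rfl

lemma word_zListW_cons (k : ℕ) (ks : List ℕ) :
    word (zListW (k :: ks)) = z k * word (zListW ks) :=
  ofLetters_append _ _

lemma word_zListW_mem_H1 (ks : List ℕ) : word (zListW ks) ∈ H1 := by
  induction ks with
  | nil => exact one_mem_H1
  | cons k ks ih => exact word_zListW_cons k ks ▸ Hy_le_H1 (z_mul_mem_Hy k ih)

lemma toZAux_replicate_x_append (k n : ℕ) (l : List Letter) :
    toZAux (List.replicate k Letter.x ++ l) n = toZAux l (n + k) := by
  induction k generalizing n with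
  | zero => rfl
  | succ k ih => rw [List.replicate_succ, List.cons_append, toZAux, ih, add_right_comm, add_assoc]

lemma toZ_zListW {ks : List ℕ} (h : ∀ k ∈ ks, 0 < k) : toZ (zListW ks) = ks := by
  induction ks with
  | nil => rfl
  | cons k ks ih =>
    obtain ⟨hk, hks⟩ := List.forall_mem_cons.1 h
    have hcons : (zListW (k :: ks)).toList =
        List.replicate (k - 1) .x ++ .y :: (zListW ks).toList := by simp [zListW]
    rw [toZ, hcons, toZAux_replicate_x_append, toZAux, zero_add, Nat.sub_add_cancel hk]
    exact congrArg (k :: ·) (ih hks)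

lemma IsH1Word.exists_zListW {l : List Letter} (h : IsH1Word l) :
    ∃ ks : List ℕ, (∀ k ∈ ks, 0 < k) ∧ l = (zListW ks).toList := by
  induction l with
  | nil => exact ⟨[], by simp, rfl⟩
  | cons u l ih =>
    obtain ⟨ks, hks, rfl⟩ := ih h.tail
    match u, ks with
    | .y, ks => exact ⟨1 :: ks, List.forall_mem_cons.2 ⟨one_pos, hks⟩, rfl⟩
    | .x, [] => exact absurd h.eq_y (by decide)
    | .x, 0 :: ks => simp at hks
    | .x, (k + 1) :: ks =>
      exact ⟨(k + 2) :: ks, by simpa using hks, by simp [zListW, List.replicate_succ]⟩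

lemma H1_le_of_zListW {N : Submodule ℚ H}
    (h : ∀ ks : List ℕ, (∀ k ∈ ks, 0 < k) → word (zListW ks) ∈ N) : H1 ≤ N :=
  H1_le_of_words fun l hl => by
    obtain ⟨ks, hks, rfl⟩ := hl.exists_zListW
    exact h ks hks

lemma H0_le_of_zListW {N : Submodule ℚ H} (h1 : 1 ∈ N)
    (h : ∀ k : ℕ, ∀ ks : List ℕ, 0 < k → (∀ k ∈ ks, 0 < k) → word (zListW ((k + 1) :: ks)) ∈ N) :
    H0 ≤ N :=
  H0_le_of_words h1 fun l hl hne => by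
    obtain ⟨_ | ⟨k, ks⟩, hks, rfl⟩ := hl.exists_zListW
    · exact absurd rfl hne
    · obtain ⟨hk, hks⟩ := List.forall_mem_cons.1 hks
      have := h k ks hk hks
      rw [word_zListW_cons, z_succ hk, mul_assoc, ← word_zListW_cons] at this
      exact ofLetters_cons .x _ ▸ this

lemma nharmLin_word_zListW {ks ls : List ℕ} (hks : ∀ k ∈ ks, 0 < k) (hls : ∀ k ∈ ls, 0 < k) :
    nharmLin (word (zListW ks)) (word (zListW ls)) = nharmW ks ls := by
  change nharmLin (ofLetters (zListW ks).toList) (ofLetters (zListW ls).toList) = _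
  simp [nharmLin, toZ_zListW hks, toZ_zListW hls]

lemma nharmW_nil_left (ks : List ℕ) : nharmW [] ks = word (zListW ks) := by rw [nharmW]

lemma nharmW_nil_right (ks : List ℕ) : nharmW ks [] = word (zListW ks) := by
  cases ks <;> rw [nharmW]

lemma nharmW_cons_cons (k l : ℕ) (ks ls : List ℕ) :
    nharmW (k :: ks) (l :: ls) =
      z k * nharmW ks (l :: ls) + z l * nharmW (k :: ks) ls - z (k + l) * nharmW ks ls := by
  rw [nharmW]

lemma nharmW_mem_H1 (ks ls : List ℕ) : nharmW ks ls ∈ H1 := by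
  fun_induction nharmW ks ls with
  | case1 ls => exact word_zListW_mem_H1 ls
  | case2 k ks => exact word_zListW_mem_H1 (k :: ks)
  | case3 k ks l ls ih₁ ih₂ ih₃ =>
    exact Hy_le_H1 (sub_mem (add_mem (z_mul_mem_Hy k ih₁) (z_mul_mem_Hy l ih₂))
      (z_mul_mem_Hy (k + l) ih₃))

lemma nharm_mem_H1 {a b : H} (ha : a ∈ H1) (hb : b ∈ H1) : nharm a b ∈ H1 :=
  nharmLin_apply a b ▸ bilinear_mem_of_words nharmLin
    (fun l₁ l₂ _ _ => by simpa [nharmLin] using nharmW_mem_H1 _ _) ha hb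

lemma nharmLin_Y_word_zListW {ks : List ℕ} (hks : ∀ k ∈ ks, 0 < k) :
    nharmLin Y (word (zListW ks)) = nharmW [1] ks :=
  nharmLin_word_zListW (ks := [1]) (by simp) hks

lemma isYInsertion_nharmLin : IsYInsertion (nharmLin Y) where
  sub_Y_mul_mem := by
    suffices H0 ≤ H0.comap (nharmLin Y - LinearMap.mulLeft ℚ Y) from this
    refine H0_le_of_zListW ?_ fun k ks hk hks => ?_
    · have h1 : nharmLin Y 1 = Y :=
        (nharmLin_Y_word_zListW (ks := []) (by simp)).trans (nharmW_nil_right [1])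
      simp [h1]
    · rw [Submodule.mem_comap, LinearMap.sub_apply, LinearMap.mulLeft_apply,
        nharmLin_Y_word_zListW (List.forall_mem_cons.2 ⟨k.succ_pos, hks⟩), nharmW_cons_cons,
        nharmW_nil_left, nharmW_nil_left, z_one, add_sub_assoc, add_sub_cancel_left, add_comm 1]
      exact sub_mem (z_succ_mul_mem_H0 hk (nharmW_mem_H1 [1] ks))
        (z_succ_mul_mem_H0 k.succ_pos (word_zListW_mem_H1 ks))
  Y_mul_sub_mem := by
    suffices H1 ≤ H0.comap (nharmLin Y ∘ₗ LinearMap.mulLeft ℚ Y -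
        LinearMap.mulLeft ℚ Y ∘ₗ LinearMap.mulLeft ℚ Y - LinearMap.mulLeft ℚ Y ∘ₗ nharmLin Y)
      from this
    refine H1_le_of_zListW fun ks hks => ?_
    have hcons : Y * word (zListW ks) = word (zListW (1 :: ks)) := (word_zListW_cons 1 ks).symm
    simp only [Submodule.mem_comap, LinearMap.sub_apply, LinearMap.comp_apply,
      LinearMap.mulLeft_apply, hcons, nharmLin_Y_word_zListW hks,
      nharmLin_Y_word_zListW (List.forall_mem_cons.2 ⟨one_pos, hks⟩), nharmW_cons_cons,
      nharmW_nil_left, z_one]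
    rw [sub_sub, sub_right_comm, sub_self, zero_sub]
    exact neg_mem (z_succ_mul_mem_H0 one_pos (word_zListW_mem_H1 ks))

end Products

section Polylog

open Finset

/-- The coefficient of `tᵐ` in the non-strict multiple polylogarithm
`∑_{m₁ ≥ ⋯ ≥ mₙ > 0} t^{m₁} / (m₁^{k₁} ⋯ mₙ^{kₙ})` of the word `z_{k₁} ⋯ z_{kₙ}`, by recursion on
letters; the coefficients at `m = 0` of nonempty words vanish because `a / 0 = 0`. -/
noncomputable def polylogCoeff : List Letter → ℕ → ℝ
  | [], m => if m = 0 then 1 else 0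
  | .x :: l, m => polylogCoeff l m / m
  | .y :: l, m => (∑ i ∈ range (m + 1), polylogCoeff l i) / m

/-- The non-strict multiple polylogarithm as a formal power series, extended linearly to `H`. -/
noncomputable def polylog : H →ₗ[ℚ] PowerSeries ℝ :=
  wordLift fun l => PowerSeries.mk (polylogCoeff l)

/-- The truncation at `m₁ ≤ M` of the series defining `Z̄`, extended linearly to `H`. -/
noncomputable def truncSum (M : ℕ) : H →ₗ[ℚ] ℝ :=
  wordLift fun l => ∑ m ∈ range (M + 1), polylogCoeff l m

/-- The value at `t` of the non-strict multiple polylogarithm, extended linearly to `H`. -/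
noncomputable def abelSum (t : ℝ) : H →ₗ[ℚ] ℝ := wordLift fun l => ∑' m, polylogCoeff l m * t ^ m

lemma coeff_polylog_ofLetters (l : List Letter) (m : ℕ) :
    (polylog (ofLetters l)).coeff m = polylogCoeff l m := by
  simp [polylog]

lemma truncSum_eq_sum_coeff (M : ℕ) (a : H) :
    truncSum M a = ∑ m ∈ range (M + 1), (polylog a).coeff m := by
  have : truncSum M = ∑ m ∈ range (M + 1),
      (PowerSeries.coeff m : PowerSeries ℝ →ₗ[ℝ] ℝ).restrictScalars ℚ ∘ₗ polylog :=
    linearMap_ext fun l => by simp [truncSum, coeff_polylog_ofLetters]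
  simp [this]

lemma coeff_polylog_X_mul (a : H) (m : ℕ) :
    (polylog (X * a)).coeff m = (polylog a).coeff m / m := by
  let c : H →ₗ[ℚ] ℝ := (PowerSeries.coeff m : PowerSeries ℝ →ₗ[ℝ] ℝ).restrictScalars ℚ ∘ₗ polylog
  have : c ∘ₗ LinearMap.mulLeft ℚ X = (m : ℚ)⁻¹ • c := linearMap_ext fun l => by
    have hcons : X * ofLetters l = ofLetters (.x :: l) := (ofLetters_cons .x l).symm
    simp [c, hcons, coeff_polylog_ofLetters, polylogCoeff, Rat.smul_def, div_eq_inv_mul]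
  simpa [c, Rat.smul_def, div_eq_inv_mul] using LinearMap.congr_fun this a

lemma coeff_polylog_Y_mul (a : H) (m : ℕ) :
    (polylog (Y * a)).coeff m = truncSum m a / m := by
  let c : H →ₗ[ℚ] ℝ := (PowerSeries.coeff m : PowerSeries ℝ →ₗ[ℝ] ℝ).restrictScalars ℚ ∘ₗ polylog
  have : c ∘ₗ LinearMap.mulLeft ℚ Y = (m : ℚ)⁻¹ • truncSum m := linearMap_ext fun l => by
    have hcons : Y * ofLetters l = ofLetters (.y :: l) := (ofLetters_cons .y l).symm
    simp [c, hcons, coeff_polylog_ofLetters, polylogCoeff, truncSum, Rat.smul_def, div_eq_inv_mul]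
  simpa [c, Rat.smul_def, div_eq_inv_mul] using LinearMap.congr_fun this a

lemma truncSum_one (M : ℕ) : truncSum M 1 = 1 := by
  rw [← ofLetters_nil, truncSum, wordLift_ofLetters]
  simp [polylogCoeff]

lemma truncSum_Y (M : ℕ) : truncSum M Y = harmonic M := by
  rw [← mul_one Y, truncSum_eq_sum_coeff, sum_range_succ']
  simp only [coeff_polylog_Y_mul, truncSum_one]
  simp [harmonic]

end Polylog

section HarmonicProduct

open Finset

lemma sum_range_mul_sum_range {R : Type*} [CommRing R] (a b : ℕ → R) (n : ℕ) :
    (∑ i ∈ range n, a i) * ∑ i ∈ range n, b i =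
      ∑ i ∈ range n, a i * ∑ j ∈ range (i + 1), b j +
        ∑ i ∈ range n, (∑ j ∈ range (i + 1), a j) * b i - ∑ i ∈ range n, a i * b i := by
  induction n with
  | zero => simp
  | succ n ih =>
    simp only [sum_range_succ] at ih ⊢
    linear_combination ih

lemma coeff_polylog_z_mul {k : ℕ} (hk : 0 < k) (a : H) (m : ℕ) :
    (polylog (z k * a)).coeff m = truncSum m a / m ^ k := by
  induction k, hk using Nat.le_induction with
  | base => simp [z_one, coeff_polylog_Y_mul]
  | succ k hk ih => rw [z_succ hk, mul_assoc, coeff_polylog_X_mul, ih, div_div, pow_succ]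

lemma truncSum_z_mul {k : ℕ} (hk : 0 < k) (a : H) (M : ℕ) :
    truncSum M (z k * a) = ∑ m ∈ range (M + 1), truncSum m a / m ^ k := by
  simp only [truncSum_eq_sum_coeff M, coeff_polylog_z_mul hk]

lemma truncSum_nharmW {ks ls : List ℕ} (hks : ∀ k ∈ ks, 0 < k) (hls : ∀ k ∈ ls, 0 < k) (M : ℕ) :
    truncSum M (nharmW ks ls) = truncSum M (word (zListW ks)) * truncSum M (word (zListW ls)) := by
  fun_induction nharmW ks ls generalizing M with
  | case1 ls => rw [word_zListW_nil, truncSum_one, one_mul]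
  | case2 k ks => rw [word_zListW_nil, truncSum_one, mul_one]
  | case3 k ks l ls ih₁ ih₂ ih₃ =>
    obtain ⟨hk, hks'⟩ := List.forall_mem_cons.1 hks
    obtain ⟨hl, hls'⟩ := List.forall_mem_cons.1 hls
    simp only [map_add, map_sub, truncSum_z_mul hk, truncSum_z_mul hl,
      truncSum_z_mul (Nat.add_pos_left hk l), word_zListW_cons, ih₁ hks' hls, ih₂ hks hls',
      ih₃ hks' hls', sum_range_mul_sum_range]
    congr 1
    · congr 1 <;> exact sum_congr rfl fun m _ => by ring
    · exact sum_congr rfl fun m _ => by rw [div_mul_div_comm, pow_add]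

theorem truncSum_nharm (M : ℕ) {a b : H} (ha : a ∈ H1) (hb : b ∈ H1) :
    truncSum M (nharm a b) = truncSum M a * truncSum M b := by
  rw [← nharmLin_apply]
  refine map_eq_mul_of_words (fun l₁ l₂ h₁ h₂ => ?_) ha hb
  obtain ⟨ks, hks, rfl⟩ := h₁.exists_zListW
  obtain ⟨ls, hls, rfl⟩ := h₂.exists_zListW
  exact (congrArg (truncSum M) (nharmLin_word_zListW hks hls)).trans (truncSum_nharmW hks hls M)

end HarmonicProduct

section ShuffleProduct

open PowerSeries (constantCoeff)

/-- The Euler operator `t d/dt` on power series. -/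
noncomputable def euler : Derivation ℝ (PowerSeries ℝ) (PowerSeries ℝ) :=
  (PowerSeries.X : PowerSeries ℝ) • PowerSeries.derivative ℝ

lemma coeff_euler (f : PowerSeries ℝ) (n : ℕ) : (euler f).coeff n = n * f.coeff n := by
  cases n with
  | zero => simp [euler]
  | succ n => simp [euler, PowerSeries.coeff_succ_X_mul, PowerSeries.coeff_derivative, mul_comm]

lemma eq_of_euler_eq {f g : PowerSeries ℝ} (h : euler f = euler g)
    (h0 : f.constantCoeff = g.constantCoeff) : f = g := by
  ext n
  rcases eq_or_ne n 0 with rfl | hn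
  · simpa using h0
  · have := congrArg (PowerSeries.coeff n) h
    rwa [coeff_euler, coeff_euler, mul_right_inj' (Nat.cast_ne_zero.2 hn)] at this

/-- The power series `ω` for which prefixing a letter to a word is integration against
`ω dt / t`. -/
noncomputable def letterForm : Letter → PowerSeries ℝ
  | .x => 1
  | .y => PowerSeries.mk 1

lemma constantCoeff_polylog_letter_mul (u : Letter) (a : H) :
    constantCoeff (polylog (word (.of u) * a)) = 0 := by
  cases u with
  | x => simpa [X] using coeff_polylog_X_mul a 0
  | y => simpa [Y] using coeff_polylog_Y_mul a 0

lemma euler_polylog_letter_mul (u : Letter) (a : H) :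
    euler (polylog (word (.of u) * a)) =
      letterForm u * polylog a - PowerSeries.C (constantCoeff (polylog a)) := by
  ext n
  rcases eq_or_ne n 0 with rfl | hn
  · cases u <;> simp [coeff_euler, letterForm]
  have hn' : (n : ℝ) ≠ 0 := Nat.cast_ne_zero.2 hn
  rw [coeff_euler, map_sub, PowerSeries.coeff_C, if_neg hn, sub_zero]
  cases u with
  | x =>
    change n * (polylog (X * a)).coeff n = (1 * polylog a).coeff n
    rw [coeff_polylog_X_mul, one_mul, mul_div_cancel₀ _ hn']
  | y =>
    change n * (polylog (Y * a)).coeff n = (PowerSeries.mk 1 * polylog a).coeff n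
    rw [coeff_polylog_Y_mul, mul_div_cancel₀ _ hn', truncSum_eq_sum_coeff, mul_comm,
      PowerSeries.coeff_mul, Finset.Nat.sum_antidiagonal_eq_sum_range_succ_mk]
    simp

lemma polylog_ofLetters_nil : polylog (ofLetters []) = 1 := by
  ext n
  simp [coeff_polylog_ofLetters, polylogCoeff, PowerSeries.coeff_one]

lemma constantCoeff_polylog_ofLetters (l : List Letter) :
    constantCoeff (polylog (ofLetters l)) = δ l := by
  cases l with
  | nil => simp [polylog_ofLetters_nil, δ]
  | cons u l => rw [ofLetters_cons, constantCoeff_polylog_letter_mul, δ, Rat.cast_zero]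

lemma IsH1Word.δ_smul_letterForm_τ {u : Letter} {l : List Letter} (h : IsH1Word (u :: l)) :
    δ l • letterForm (τ u) = δ l • 1 := by
  cases l with
  | nil => rw [h.eq_y, τ, letterForm]
  | cons v l => simp only [δ, zero_smul]

lemma IsH1Word.euler_polylog_cons {u : Letter} {l : List Letter} (h : IsH1Word (u :: l)) :
    euler (polylog (ofLetters (u :: l))) =
      letterForm u * polylog (ofLetters l) - δ l • letterForm (τ u) := by
  rw [h.δ_smul_letterForm_τ, ofLetters_cons, euler_polylog_letter_mul,
    constantCoeff_polylog_ofLetters]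
  congr 1
  ext n
  simp [PowerSeries.coeff_C, PowerSeries.coeff_one, Rat.smul_def]

lemma polylog_nshW {l₁ l₂ : List Letter} (h₁ : IsH1Word l₁) (h₂ : IsH1Word l₂) :
    polylog (nshW l₁ l₂) = polylog (ofLetters l₁) * polylog (ofLetters l₂) := by
  induction l₁ generalizing l₂ with
  | nil => rw [nshW_nil_left, polylog_ofLetters_nil, one_mul]
  | cons u₁ w₁ ih₁ =>
    induction l₂ with
    | nil => rw [nshW_nil_right, polylog_ofLetters_nil, mul_one]
    | cons u₂ w₂ ih₂ =>
      have hε₁ := constantCoeff_polylog_ofLetters (u₁ :: w₁)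
      have hε₂ := constantCoeff_polylog_ofLetters (u₂ :: w₂)
      simp only [δ, Rat.cast_zero] at hε₁ hε₂
      rw [nshW_cons_cons]
      refine eq_of_euler_eq ?_ ?_
      · simp only [map_add, map_sub, map_smul, map_rat_smul, euler_polylog_letter_mul,
          ih₁ h₁.tail h₂, ih₂ h₂.tail, Derivation.leibniz, smul_eq_mul, h₁.euler_polylog_cons,
          h₂.euler_polylog_cons, hε₁, hε₂, map_mul, mul_zero, zero_mul, map_zero, sub_zero]
        simp only [Algebra.smul_def]
        ring
      · simp only [map_add, map_sub, map_smul, map_rat_smul, map_mul, hε₁, hε₂,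
          constantCoeff_polylog_letter_mul]
        simp

theorem polylog_nsh {a b : H} (ha : a ∈ H1) (hb : b ∈ H1) :
    polylog (nsh a b) = polylog a * polylog b := by
  rw [← nshLin_apply]
  exact map_eq_mul_of_words (fun l₁ l₂ h₁ h₂ => nshLin_ofLetters l₁ l₂ ▸ polylog_nshW h₁ h₂) ha hb

end ShuffleProduct

section Convergence

open Finset Filter Asymptotics

lemma harmonic_cast_eq_sum (M : ℕ) : (harmonic M : ℝ) = ∑ m ∈ range (M + 1), (m : ℝ)⁻¹ := by
  rw [sum_range_succ']
  simp [harmonic]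

lemma harmonic_cast_nonneg (M : ℕ) : (0 : ℝ) ≤ harmonic M :=
  harmonic_cast_eq_sum M ▸ sum_nonneg fun m _ => by positivity

lemma harmonic_cast_le (M : ℕ) : (harmonic M : ℝ) ≤ M := by
  rw [harmonic_cast_eq_sum, sum_range_succ']
  simpa using sum_le_card_nsmul (range M) (fun m => ((m + 1 : ℕ) : ℝ)⁻¹) 1
    fun m _ => Nat.cast_inv_le_one (m + 1)

lemma polylogCoeff_nonneg (l : List Letter) (m : ℕ) : 0 ≤ polylogCoeff l m := by
  induction l generalizing m with
  | nil => simp only [polylogCoeff]; positivity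
  | cons u l ih =>
    cases u with
    | x => exact div_nonneg (ih m) m.cast_nonneg
    | y => exact div_nonneg (sum_nonneg fun i _ => ih i) m.cast_nonneg

lemma polylogCoeff_x_cons_le (l : List Letter) (m : ℕ) :
    polylogCoeff (.x :: l) m ≤ polylogCoeff l m := by
  rcases m.eq_zero_or_pos with rfl | hm
  · simpa [polylogCoeff] using polylogCoeff_nonneg l 0
  · exact div_le_self (polylogCoeff_nonneg l m) (mod_cast hm)

lemma sum_polylogCoeff_le (l : List Letter) (M : ℕ) :
    ∑ m ∈ range (M + 1), polylogCoeff l m ≤ (harmonic M : ℝ) ^ l.count .y := by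
  induction l with
  | nil => simp [polylogCoeff]
  | cons u l ih =>
    cases u with
    | x => simpa using (sum_le_sum fun m _ => polylogCoeff_x_cons_le l m).trans ih
    | y =>
      rw [List.count_cons_self, pow_succ', harmonic_cast_eq_sum, sum_mul, ← harmonic_cast_eq_sum]
      refine sum_le_sum fun m hm => ?_
      rw [polylogCoeff, div_eq_inv_mul]
      gcongr
      refine (sum_le_sum_of_subset_of_nonneg (range_mono ?_) fun i _ _ => ?_).trans ih
      · exact mem_range.1 hm
      · exact polylogCoeff_nonneg l i

lemma polylogCoeff_le_pow (l : List Letter) (m : ℕ) : polylogCoeff l m ≤ (m : ℝ) ^ l.count .y :=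
  calc polylogCoeff l m ≤ ∑ i ∈ range (m + 1), polylogCoeff l i :=
        single_le_sum (fun i _ => polylogCoeff_nonneg l i) (self_mem_range_succ m)
    _ ≤ (harmonic m : ℝ) ^ l.count .y := sum_polylogCoeff_le l m
    _ ≤ (m : ℝ) ^ l.count .y := pow_le_pow_left₀ (harmonic_cast_nonneg m) (harmonic_cast_le m) _

lemma IsH1Word.exists_polylogCoeff_le {l : List Letter} (h : IsH1Word l) (hl : l ≠ []) :
    ∃ n : ℕ, ∀ m, polylogCoeff l m ≤ (harmonic m : ℝ) ^ n / m := by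
  induction l with
  | nil => contradiction
  | cons u l ih =>
    cases u with
    | y => exact ⟨l.count .y, fun m => by rw [polylogCoeff]; gcongr; exact sum_polylogCoeff_le l m⟩
    | x =>
      have hl : l ≠ [] := by rintro rfl; simp [IsH1Word] at h
      obtain ⟨n, hn⟩ := ih h.tail hl
      exact ⟨n, fun m => (polylogCoeff_x_cons_le l m).trans (hn m)⟩

lemma isBigO_harmonic_log : (fun M : ℕ => (harmonic M : ℝ)) =O[atTop] fun M : ℕ => Real.log M := by
  have hlog : Tendsto (fun M : ℕ => Real.log M) atTop atTop :=
    Real.tendsto_log_atTop.comp tendsto_natCast_atTop_atTop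
  refine IsBigO.of_bound 2 ?_
  filter_upwards [hlog.eventually_ge_atTop 1] with M hM
  rw [Real.norm_of_nonneg (harmonic_cast_nonneg M), Real.norm_of_nonneg (by linarith)]
  linarith [harmonic_le_one_add_log M]

lemma tendsto_harmonic_atTop : Tendsto (fun M : ℕ => (harmonic M : ℝ)) atTop atTop := by
  refine tendsto_atTop_mono log_add_one_le_harmonic ?_
  exact_mod_cast Real.tendsto_log_atTop.comp
    (tendsto_natCast_atTop_atTop.comp (tendsto_add_atTop_nat 1))

lemma superpolynomialDecay_harmonic {f : ℕ → ℝ} {ε : ℝ} (hε : 0 < ε)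
    (hf : f =O[atTop] fun M : ℕ => (M : ℝ) ^ (-ε)) :
    SuperpolynomialDecay atTop (fun M : ℕ => (harmonic M : ℝ)) f :=
  superpolynomialDecay_of_isBigO_log tendsto_natCast_atTop_atTop isBigO_harmonic_log hε hf

lemma IsH1Word.summable_polylogCoeff_mul_rpow {l : List Letter} (h : IsH1Word l) (hl : l ≠ []) :
    Summable fun m : ℕ => |polylogCoeff (.x :: l) m| * (m : ℝ) ^ (1 / 2 : ℝ) := by
  obtain ⟨n, hn⟩ := h.exists_polylogCoeff_le hl
  have hlog : (fun m : ℕ => (harmonic m : ℝ) ^ n * (m : ℝ) ^ (-(1 / 4) : ℝ)) =O[atTop]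
      fun _ => (1 : ℝ) :=
    (superpolynomialDecay_harmonic (by norm_num) (isBigO_refl _ _) n).isBigO_one ℝ
  have hbound : (fun m : ℕ => |polylogCoeff (.x :: l) m| * (m : ℝ) ^ (1 / 2 : ℝ)) =O[atTop]
      fun m : ℕ => (harmonic m : ℝ) ^ n * (m : ℝ) ^ (-(1 / 4) : ℝ) * (m : ℝ) ^ (-(5 / 4) : ℝ) := by
    refine IsBigO.of_norm_eventuallyLE ?_
    filter_upwards [eventually_gt_atTop 0] with m hm
    have hm' : (0 : ℝ) < m := mod_cast hm
    have hpow : ((m : ℝ) ^ (-(1 / 4) : ℝ)) * (m : ℝ) ^ (-(5 / 4) : ℝ) * (m * m) =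
        (m : ℝ) ^ (1 / 2 : ℝ) := by
      nth_rw 3 4 [← Real.rpow_one (m : ℝ)]
      rw [← Real.rpow_add hm', ← Real.rpow_add hm', ← Real.rpow_add hm']
      norm_num
    rw [Real.norm_of_nonneg (by positivity), abs_of_nonneg (polylogCoeff_nonneg _ _), polylogCoeff]
    calc polylogCoeff l m / m * (m : ℝ) ^ (1 / 2 : ℝ)
        ≤ (harmonic m : ℝ) ^ n / m / m * (m : ℝ) ^ (1 / 2 : ℝ) := by gcongr; exact hn m
      _ = _ := by rw [← hpow]; field_simp
  exact summable_of_isBigO_nat (Real.summable_nat_rpow.2 (by norm_num : -(5 / 4 : ℝ) < -1))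
    (hbound.trans (by simpa using hlog.mul (isBigO_refl _ _)))

/-- The elements `a` of `H` for which the coefficients of `polylog a`, weighted by `w`, sum
to `E a`. -/
def polylogHasSum (w : ℕ → ℝ) (E : H →ₗ[ℚ] ℝ) : Submodule ℚ H where
  carrier := {a | HasSum (fun m => (polylog a).coeff m * w m) (E a)}
  zero_mem' := by simp
  add_mem' ha hb := by simpa [add_mul] using HasSum.add ha hb
  smul_mem' c a ha := by
    simpa [Rat.smul_def, mul_assoc] using HasSum.mul_left (c : ℝ) ha

lemma ofLetters_mem_polylogHasSum {w : ℕ → ℝ} {E : H →ₗ[ℚ] ℝ} {l : List Letter} :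
    ofLetters l ∈ polylogHasSum w E ↔
      HasSum (fun m => polylogCoeff l m * w m) (E (ofLetters l)) := by
  simp only [← coeff_polylog_ofLetters]
  rfl

lemma summable_abs_coeff_polylog_mul_rpow {a : H} (ha : a ∈ H0) :
    Summable fun m : ℕ => |(polylog a).coeff m| * (m : ℝ) ^ (1 / 2 : ℝ) := by
  let E : H →ₗ[ℚ] ℝ := wordLift fun l => ∑' m : ℕ, polylogCoeff l m * (m : ℝ) ^ (1 / 2 : ℝ)
  have hle : H0 ≤ polylogHasSum (fun m => (m : ℝ) ^ (1 / 2 : ℝ)) E := by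
    refine H0_le_of_words (ofLetters_nil ▸ ?_) fun l h hl => ?_
    all_goals rw [ofLetters_mem_polylogHasSum, wordLift_ofLetters]
    · have hzero : ∀ m ∉ ({0} : Finset ℕ), polylogCoeff [] m * (m : ℝ) ^ (1 / 2 : ℝ) = 0 := by
        simp +contextual [polylogCoeff]
      exact (summable_of_ne_finset_zero hzero).hasSum
    · simpa only [abs_of_nonneg (polylogCoeff_nonneg _ _)] using
        (h.summable_polylogCoeff_mul_rpow hl).hasSum
  refine (hle ha).summable.abs.congr fun m => ?_
  rw [abs_mul, abs_of_nonneg (Real.rpow_nonneg m.cast_nonneg _)]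

lemma hasSum_abelSum {t : ℝ} (ht : t ∈ Set.Ico (0 : ℝ) 1) (a : H) :
    HasSum (fun m => (polylog a).coeff m * t ^ m) (abelSum t a) := by
  refine mem_of_ofLetters_mem (N := polylogHasSum (fun m => t ^ m) (abelSum t)) (fun l => ?_) a
  rw [ofLetters_mem_polylogHasSum, abelSum, wordLift_ofLetters]
  have hgeom : Summable fun m : ℕ => (m : ℝ) ^ l.count .y * t ^ m :=
    summable_pow_mul_geometric_of_norm_lt_one _ (by rw [Real.norm_of_nonneg ht.1]; exact ht.2)
  refine (hgeom.of_nonneg_of_le (fun m => ?_) fun m => ?_).hasSum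
  · exact mul_nonneg (polylogCoeff_nonneg l m) (pow_nonneg ht.1 m)
  · exact mul_le_mul_of_nonneg_right (polylogCoeff_le_pow l m) (pow_nonneg ht.1 m)

lemma abelSum_nsh {t : ℝ} (ht : t ∈ Set.Ico (0 : ℝ) 1) {a b : H} (ha : a ∈ H1) (hb : b ∈ H1) :
    abelSum t (nsh a b) = abelSum t a * abelSum t b := by
  have hnorm (c : H) : Summable fun m => ‖(polylog c).coeff m * t ^ m‖ :=
    (hasSum_abelSum ht c).summable.norm
  rw [← (hasSum_abelSum ht a).tsum_eq, ← (hasSum_abelSum ht b).tsum_eq,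
    tsum_mul_tsum_eq_tsum_sum_antidiagonal_of_summable_norm (hnorm a) (hnorm b),
    ← (hasSum_abelSum ht (nsh a b)).tsum_eq, polylog_nsh ha hb]
  refine tsum_congr fun n => ?_
  rw [PowerSeries.coeff_mul, sum_mul]
  refine sum_congr rfl fun p hp => ?_
  rw [← mem_antidiagonal.1 hp, pow_add, mul_mul_mul_comm]

lemma abelSum_Y {t : ℝ} (ht : t ∈ Set.Ico (0 : ℝ) 1) : abelSum t Y = -Real.log (1 - t) := by
  have hY := (hasSum_nat_add_iff' 1).2 (hasSum_abelSum ht Y)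
  have hcoeff (m : ℕ) : (polylog Y).coeff m = (m : ℝ)⁻¹ := by
    rw [← mul_one Y, coeff_polylog_Y_mul, truncSum_one, one_div]
  simp only [hcoeff, range_one, sum_singleton, Nat.cast_zero, inv_zero, zero_mul, sub_zero] at hY
  have hlog := Real.hasSum_pow_div_log_of_abs_lt_one (abs_lt.2 ⟨by linarith [ht.1], ht.2⟩)
  refine hY.unique ?_
  simpa [div_eq_inv_mul] using hlog

end Convergence

section NonstrictZeta

open Finset Filter Topology

/-- The weakly decreasing `n`-tuples with entries in `{1, …, M}`. -/
def decreasingTuples (n M : ℕ) : Finset (Fin n → ℕ) :=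
  {f ∈ Fintype.piFinset fun _ => Icc 1 M | ∀ i j : Fin n, i ≤ j → f j ≤ f i}

lemma mem_decreasingTuples {n M : ℕ} {f : Fin n → ℕ} :
    f ∈ decreasingTuples n M ↔
      ((∀ i, 0 < f i) ∧ ∀ i j : Fin n, i ≤ j → f j ≤ f i) ∧ ∀ i, f i ≤ M := by
  simp only [decreasingTuples, mem_filter, Fintype.mem_piFinset, mem_Icc, Nat.succ_le_iff,
    forall_and]
  tauto

lemma cons_mem_decreasingTuples {n M m : ℕ} {f : Fin n → ℕ} :
    (Fin.cons m f : Fin (n + 1) → ℕ) ∈ decreasingTuples (n + 1) M ↔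
      m ∈ Icc 1 M ∧ f ∈ decreasingTuples n m := by
  simp only [mem_decreasingTuples, Fin.forall_fin_succ, Fin.cons_zero, Fin.cons_succ, mem_Icc,
    Fin.succ_le_succ_iff, Fin.zero_le, le_refl, Fin.le_zero_iff, Fin.succ_ne_zero, forall_const,
    true_and, IsEmpty.forall_iff]
  constructor
  · rintro ⟨⟨⟨hm, hpos⟩, hle, hanti⟩, hM, -⟩
    exact ⟨⟨hm, hM⟩, ⟨hpos, hanti⟩, hle⟩
  · rintro ⟨⟨hm, hM⟩, ⟨hpos, hanti⟩, hle⟩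
    exact ⟨⟨⟨hm, hpos⟩, hle, hanti⟩, hM, fun i => (hle i).trans hM⟩

lemma sum_decreasingTuples_succ {n M : ℕ} (F : (Fin (n + 1) → ℕ) → ℝ) :
    ∑ f ∈ decreasingTuples (n + 1) M, F f =
      ∑ m ∈ Icc 1 M, ∑ f ∈ decreasingTuples n m, F (Fin.cons m f) := by
  rw [sum_sigma']
  refine sum_nbij' (fun f => ⟨f 0, Fin.tail f⟩) (fun p => Fin.cons p.1 p.2) ?_ ?_ ?_ ?_ ?_
  · intro f hf
    rwa [mem_sigma, ← cons_mem_decreasingTuples, Fin.cons_self_tail]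
  · intro p hp
    exact cons_mem_decreasingTuples.2 (mem_sigma.1 hp)
  all_goals simp

lemma sum_decreasingTuples {ks : List ℕ} (hks : ∀ k ∈ ks, 0 < k) (M : ℕ) :
    ∑ f ∈ decreasingTuples ks.length M, ∏ i : Fin ks.length, ((f i : ℝ) ^ ks.get i)⁻¹ =
      truncSum M (word (zListW ks)) := by
  induction ks generalizing M with
  | nil =>
    have huniv : decreasingTuples 0 M = {Fin.elim0} := by
      ext f
      simp [mem_decreasingTuples, Subsingleton.elim f Fin.elim0]
    simp [huniv, word_zListW_nil, truncSum_one]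
  | cons k ks ih =>
    obtain ⟨hk, hks'⟩ := List.forall_mem_cons.1 hks
    have hterm (m : ℕ) (f : Fin ks.length → ℕ) :
        ∏ i : Fin (ks.length + 1),
            (((Fin.cons m f : Fin (ks.length + 1) → ℕ) i : ℝ) ^ (k :: ks).get i)⁻¹ =
          (∏ i, ((f i : ℝ) ^ ks.get i)⁻¹) / m ^ k := by
      rw [Fin.prod_univ_succ]
      simp [div_eq_inv_mul]
    rw [word_zListW_cons, truncSum_z_mul hk]
    refine (sum_decreasingTuples_succ _).trans
      ((sum_congr rfl fun m _ => sum_congr rfl fun f _ => hterm m f).trans ?_)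
    simp only [← sum_div, ih hks']
    rw [range_eq_Ico, sum_eq_sum_Ico_succ_bot (Nat.succ_pos M), Nat.cast_zero, zero_pow hk.ne',
      div_zero, zero_add]
    rfl

lemma nmzeta_eq_of_tendsto_truncSum {ks : List ℕ} (hks : ∀ k ∈ ks, 0 < k) {c : ℝ}
    (hc : Tendsto (fun M => truncSum M (word (zListW ks))) atTop (𝓝 c)) : nmzeta ks = c := by
  classical
  let U (M : ℕ) := (decreasingTuples ks.length M).subtype fun f =>
    (∀ i, 0 < f i) ∧ ∀ i j : Fin ks.length, i ≤ j → f j ≤ f i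
  have hU : Tendsto U atTop atTop := by
    refine tendsto_atTop_finset_of_monotone (fun M N hMN f hf => ?_) fun f => ⟨∑ i, f.1 i, ?_⟩
    · rw [mem_subtype, mem_decreasingTuples] at hf ⊢
      exact ⟨hf.1, fun i => (hf.2 i).trans hMN⟩
    · rw [mem_subtype, mem_decreasingTuples]
      exact ⟨f.2, fun i => single_le_sum (fun _ _ => Nat.zero_le _) (mem_univ i)⟩
  refine (hasSum_of_nonneg_of_tendsto_sum (fun f => by positivity) hU ?_).tsum_eq
  refine hc.congr fun M => ?_
  rw [← sum_decreasingTuples hks M]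
  exact (sum_subtype_of_mem (fun f : Fin ks.length → ℕ => ∏ i, ((f i : ℝ) ^ ks.get i)⁻¹)
    fun f hf => (mem_decreasingTuples.1 hf).1).symm

lemma summable_coeff_polylog {a : H} (ha : a ∈ H0) : Summable fun m => (polylog a).coeff m := by
  refine (summable_abs_coeff_polylog_mul_rpow ha).of_norm_bounded_eventually_nat ?_
  filter_upwards [eventually_ge_atTop 1] with m hm
  exact le_mul_of_one_le_right (abs_nonneg _) (Real.one_le_rpow (mod_cast hm) (by norm_num))

lemma zbarLin_word_zListW {ks : List ℕ} (hks : ∀ k ∈ ks, 0 < k) :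
    zbarLin (word (zListW ks)) = nmzeta ks := by
  change zbarLin (ofLetters (zListW ks).toList) = _
  simp [zbarLin, toZ_zListW hks]

lemma hasSum_coeff_polylog_word_zListW {ks : List ℕ} (hks : ∀ k ∈ ks, 0 < k)
    (hmem : word (zListW ks) ∈ H0) :
    HasSum (fun m => (polylog (word (zListW ks))).coeff m) (zbarLin (word (zListW ks))) := by
  have hsum := (summable_coeff_polylog hmem).hasSum
  rwa [zbarLin_word_zListW hks, nmzeta_eq_of_tendsto_truncSum hks]
  exact (hsum.tendsto_sum_nat.comp (tendsto_add_atTop_nat 1)).congr fun M =>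
    (truncSum_eq_sum_coeff M _).symm

theorem hasSum_coeff_polylog {a : H} (ha : a ∈ H0) :
    HasSum (fun m => (polylog a).coeff m) (Zbar a) := by
  have hle : H0 ≤ polylogHasSum (fun _ => 1) zbarLin := by
    refine H0_le_of_zListW ?_ fun k ks hk hks => ?_
    · simpa [polylogHasSum, word_zListW_nil] using
        hasSum_coeff_polylog_word_zListW (ks := []) (by simp) one_mem_H0
    · have hmem : word (zListW ((k + 1) :: ks)) ∈ H0 :=
        word_zListW_cons (k + 1) ks ▸ z_succ_mul_mem_H0 hk (word_zListW_mem_H1 ks)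
      simpa [polylogHasSum] using
        hasSum_coeff_polylog_word_zListW (List.forall_mem_cons.2 ⟨k.succ_pos, hks⟩) hmem
  simpa [polylogHasSum, zbarLin_apply] using hle ha

end NonstrictZeta

section Regularization

open Filter Topology Asymptotics Polynomial

variable {ι : Type*} {l : Filter ι} {u : ι → ℝ} {E : ι → H →ₗ[ℚ] ℝ} {F : H →ₗ[ℚ] ℝ[X]}

/-- The elements `a` of `H` for which `E · a` agrees with the polynomial `F a` in `u`, up to an
error that decays faster than any power of `u`. -/
def polynomialAsymptotics (l : Filter ι) (u : ι → ℝ) (E : ι → H →ₗ[ℚ] ℝ) (F : H →ₗ[ℚ] ℝ[X]) :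
    Submodule ℚ H where
  carrier := {a | SuperpolynomialDecay l u fun i => E i a - (F a).eval (u i)}
  zero_mem' := (superpolynomialDecay_zero l u).congr fun i => by simp
  add_mem' ha hb := by
    refine (SuperpolynomialDecay.add ha hb).congr fun i => ?_
    simp only [Pi.add_apply, map_add, eval_add]
    ring
  smul_mem' c a ha := by
    refine (SuperpolynomialDecay.const_mul ha (c : ℝ)).congr fun i => ?_
    simp [Rat.smul_def, mul_sub]

lemma mem_polynomialAsymptotics {a : H} :
    a ∈ polynomialAsymptotics l u E F ↔
      SuperpolynomialDecay l u fun i => E i a - (F a).eval (u i) := Iff.rfl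

theorem IsYInsertion.H1_le_polynomialAsymptotics {m : H →ₗ[ℚ] H} (hm : IsYInsertion m)
    (hE : ∀ a ∈ H1, ∀ᶠ i in l, E i (m a) = u i * E i a)
    (hF : ∀ a ∈ H1, F (m a) = Polynomial.X * F a)
    (h0 : H0 ≤ polynomialAsymptotics l u E F) : H1 ≤ polynomialAsymptotics l u E F := by
  refine hm.H1_le h0 fun a ha ha' => ?_
  rw [mem_polynomialAsymptotics] at ha' ⊢
  refine ha'.param_mul.congr' ?_
  filter_upwards [hE a ha] with i hi
  simp [hi, hF a ha, mul_sub]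

variable {f g : H →ₗ[ℚ] ℝ[X]}

lemma superpolynomialDecay_truncSum_sub_Zbar {a : H} (ha : a ∈ H0) :
    SuperpolynomialDecay atTop (fun M : ℕ => (harmonic M : ℝ)) fun M => truncSum M a - Zbar a := by
  refine superpolynomialDecay_harmonic one_half_pos ?_
  simpa only [truncSum_eq_sum_coeff] using isBigO_sum_range_sub one_half_pos.le
    (summable_abs_coeff_polylog_mul_rpow ha) (hasSum_coeff_polylog ha)

lemma superpolynomialDecay_abelSum_sub_Zbar {a : H} (ha : a ∈ H0) :
    SuperpolynomialDecay (𝓝[<] 1) (fun t : ℝ => -Real.log (1 - t))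
      fun t => abelSum t a - Zbar a := by
  have hlog : (fun t : ℝ => -Real.log (1 - t)) =O[𝓝[<] 1] fun t => Real.log (1 - t)⁻¹ := by
    simpa only [Real.log_inv] using isBigO_refl _ _
  have hdecay := isBigO_tsum_mul_pow_sub one_half_pos.le one_half_lt_one.le
    (summable_abs_coeff_polylog_mul_rpow ha) (hasSum_coeff_polylog ha)
  refine superpolynomialDecay_of_isBigO_log tendsto_inv_one_sub_atTop hlog one_half_pos
    (hdecay.congr' ?_ .rfl)
  filter_upwards [eventually_nhdsLT_one_mem_Ico] with t ht
  rw [(hasSum_abelSum ht a).tsum_eq]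

theorem superpolynomialDecay_truncSum_sub_eval (hf : IsRegHom nharm Zbar f) {a : H} (ha : a ∈ H1) :
    SuperpolynomialDecay atTop (fun M : ℕ => (harmonic M : ℝ))
      fun M => truncSum M a - (f a).eval (harmonic M : ℝ) := by
  obtain ⟨hmul, hzeta, hY⟩ := hf
  refine isYInsertion_nharmLin.H1_le_polynomialAsymptotics (fun b hb => .of_forall fun M => ?_)
    (fun b hb => ?_) (fun b hb => ?_) ha
  · rw [nharmLin_apply, truncSum_nharm M Y_mem_H1 hb, truncSum_Y]
  · rw [nharmLin_apply, hmul Y Y_mem_H1 b hb, hY]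
  · simpa only [mem_polynomialAsymptotics, hzeta b hb, eval_C] using
      superpolynomialDecay_truncSum_sub_Zbar hb

theorem superpolynomialDecay_abelSum_sub_eval (hg : IsRegHom nsh Zbar g) {a : H} (ha : a ∈ H1) :
    SuperpolynomialDecay (𝓝[<] 1) (fun t : ℝ => -Real.log (1 - t))
      fun t => abelSum t a - (g a).eval (-Real.log (1 - t)) := by
  obtain ⟨hmul, hzeta, hY⟩ := hg
  refine isYInsertion_nshLin.H1_le_polynomialAsymptotics (fun b hb => ?_) (fun b hb => ?_)
    (fun b hb => ?_) ha
  · filter_upwards [eventually_nhdsLT_one_mem_Ico] with t ht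
    rw [nshLin_apply, abelSum_nsh ht Y_mem_H1 hb, abelSum_Y ht]
  · rw [nshLin_apply, hmul Y Y_mem_H1 b hb, hY]
  · simpa only [mem_polynomialAsymptotics, hzeta b hb, eval_C] using
      superpolynomialDecay_abelSum_sub_Zbar hb

end Regularization

section DoubleShuffle

open Filter Topology Polynomial

variable {f g : H →ₗ[ℚ] ℝ[X]} {w₁ w₂ : H}

lemma tendsto_abelSum_mul_sub_Zbar (hg : IsRegHom nsh Zbar g) (h₁ : w₁ ∈ H1) (h₂ : w₂ ∈ H0) :
    Tendsto (fun t => abelSum t w₁ * (abelSum t w₂ - Zbar w₂)) (𝓝[<] 1) (𝓝 0) :=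
  tendsto_zero_of_superpolynomialDecay (superpolynomialDecay_mul_of_sub_eval (g w₁)
    (superpolynomialDecay_abelSum_sub_eval hg h₁) (superpolynomialDecay_abelSum_sub_Zbar h₂))

lemma tendsto_truncSum_mul_sub_Zbar (hf : IsRegHom nharm Zbar f) (h₁ : w₁ ∈ H1) (h₂ : w₂ ∈ H0) :
    Tendsto (fun M => truncSum M w₁ * (truncSum M w₂ - Zbar w₂)) atTop (𝓝 0) :=
  tendsto_zero_of_superpolynomialDecay (superpolynomialDecay_mul_of_sub_eval (f w₁)
    (superpolynomialDecay_truncSum_sub_eval hf h₁) (superpolynomialDecay_truncSum_sub_Zbar h₂))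

lemma tendsto_abelSum_nharm_sub (hf : IsRegHom nharm Zbar f) (h₁ : w₁ ∈ H1) (h₂ : w₂ ∈ H0) :
    Tendsto (fun t => abelSum t (nharm w₁ w₂) - Zbar w₂ * abelSum t w₁) (𝓝[<] 1) (𝓝 0) := by
  let d (m : ℕ) : ℝ := (polylog (nharm w₁ w₂)).coeff m - Zbar w₂ * (polylog w₁).coeff m
  have hpartial (M : ℕ) : ∑ m ∈ Finset.range (M + 1), d m =
      truncSum M w₁ * (truncSum M w₂ - Zbar w₂) := by
    rw [Finset.sum_sub_distrib, ← Finset.mul_sum, ← truncSum_eq_sum_coeff, ← truncSum_eq_sum_coeff,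
      truncSum_nharm M h₁ (H0_le_H1 h₂)]
    ring
  have hlim : Tendsto (fun M => ∑ m ∈ Finset.range M, d m) atTop (𝓝 0) :=
    (tendsto_add_atTop_iff_nat 1).1
      ((tendsto_truncSum_mul_sub_Zbar hf h₁ h₂).congr fun M => (hpartial M).symm)
  refine (Real.tendsto_tsum_powerSeries_nhdsWithin_lt hlim).congr' ?_
  filter_upwards [eventually_nhdsLT_one_mem_Ico] with t ht
  refine HasSum.tsum_eq ?_
  refine ((hasSum_abelSum ht _).sub ((hasSum_abelSum ht w₁).mul_left (Zbar w₂))).congr_fun ?_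
  intro m
  simp only [d]
  ring

theorem tendsto_abelSum_nsh_sub_nharm (hf : IsRegHom nharm Zbar f) (hg : IsRegHom nsh Zbar g)
    (h₁ : w₁ ∈ H1) (h₂ : w₂ ∈ H0) :
    Tendsto (fun t => abelSum t (nsh w₁ w₂ - nharm w₁ w₂)) (𝓝[<] 1) (𝓝 0) := by
  have hdiff := (tendsto_abelSum_mul_sub_Zbar hg h₁ h₂).sub (tendsto_abelSum_nharm_sub hf h₁ h₂)
  rw [sub_zero] at hdiff
  refine hdiff.congr' ?_
  filter_upwards [eventually_nhdsLT_one_mem_Ico] with t ht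
  rw [map_sub, abelSum_nsh ht h₁ (H0_le_H1 h₂)]
  ring

theorem eq_zero_of_isRegHom_nharm (hf : IsRegHom nharm Zbar f) {a : H} (ha : a ∈ H1)
    (h : Tendsto (fun t => abelSum t a) (𝓝[<] 1) (𝓝 0)) : f a = 0 := by
  have hlim : Tendsto (fun t => ∑' m, (polylog a).coeff m * t ^ m) (𝓝[<] 1) (𝓝 0) := by
    refine h.congr' ?_
    filter_upwards [eventually_nhdsLT_one_mem_Ico] with t ht
    exact (hasSum_abelSum ht a).tsum_eq.symm
  rw [← C_0]
  refine polynomial_eq_C_of_tendsto_tsum_mul_pow tendsto_harmonic_atTop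
    (fun t ht => (hasSum_abelSum ht a).summable) ?_ hlim
  simpa only [truncSum_eq_sum_coeff] using
    tendsto_zero_of_superpolynomialDecay (superpolynomialDecay_truncSum_sub_eval hf ha)

theorem eq_zero_of_isRegHom_nsh (hg : IsRegHom nsh Zbar g) {a : H} (ha : a ∈ H1)
    (h : Tendsto (fun t => abelSum t a) (𝓝[<] 1) (𝓝 0)) : g a = 0 := by
  have hdecay := tendsto_zero_of_superpolynomialDecay (superpolynomialDecay_abelSum_sub_eval hg ha)
  rw [← C_0]
  refine polynomial_eq_C_of_tendsto_eval tendsto_neg_log_one_sub_atTop ?_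
  simpa using h.sub hdecay

end DoubleShuffle

end H

/-- Extended double shuffle relations for non-strict multiple zeta values:
if `Z̄^{*̄}` and `Z̄^{ш̄}` are the ℚ-algebra homomorphisms `(H¹, *̄) → ℝ[T]` resp.
`(H¹, ш̄) → ℝ[T]` extending `Z̄` and sending `y` to `T`, then for all `w₁ ∈ H¹`
and `w₂ ∈ H⁰` one has `Z̄^{*̄}(w₁ ш̄ w₂ − w₁ *̄ w₂) = 0` and
`Z̄^{ш̄}(w₁ ш̄ w₂ − w₁ *̄ w₂) = 0`. -/
theorem extended_double_shuffle (f g : H →ₗ[ℚ] Polynomial ℝ)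
    (hf : IsRegHom nharm Zbar f) (hg : IsRegHom nsh Zbar g) :
    ∀ w1 ∈ H1, ∀ w2 ∈ H0,
      f (nsh w1 w2 - nharm w1 w2) = 0 ∧ g (nsh w1 w2 - nharm w1 w2) = 0 := by
  intro w1 h1 w2 h2
  have hmem : nsh w1 w2 - nharm w1 w2 ∈ H1 :=
    sub_mem (nsh_mem_H1 h1 (H0_le_H1 h2)) (nharm_mem_H1 h1 (H0_le_H1 h2))
  have hlim := tendsto_abelSum_nsh_sub_nharm hf hg h1 h2
  exact ⟨eq_zero_of_isRegHom_nharm hf hmem hlim, eq_zero_of_isRegHom_nsh hg hmem hlim⟩
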